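/- For every pair of exponents (q,r) with 2 < q ≤ ∞ and 1/q + 1/r = 1/2, there exists a constant C_{q,r} > 0 such that for all f ∈ L²(ℝ²) one has ‖e^{itΔ} f‖_{L^q_t L^r_x(ℝ×ℝ²)} ≤ C_{q,r} ‖f‖_{L²(ℝ²)}. -/

import Mathlib

open MeasureTheory Complex FourierTransform RealInnerProductSpace SchwartzMap
open scoped ENNReal

noncomputable section

/-- The Euclidean plane `ℝ²`. -/
abbrev E2 := EuclideanSpace ℝ (Fin 2)

/-- `φ` is a `C^∞_0(ℝ²)` symbol: smooth and compactly supported. -/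
def IsCinfc (φ : E2 → ℂ) : Prop := ContDiff ℝ (⊤ : ℕ∞) φ ∧ HasCompactSupport φ

/-- The convolution kernel of `e^{itΔ} P`, where `P` is the Fourier multiplier with symbol `φ`:
`K_t(z) = ∫ φ(ξ) e^{-4π² i t |ξ|²} e^{2πi z·ξ} dξ`. -/
def schrodingerKernel (φ : E2 → ℂ) (t : ℝ) (z : E2) : ℂ :=
  ∫ ξ : E2, φ ξ *
    Complex.exp (Complex.I *
      ((2 * Real.pi * ⟪z, ξ⟫ - 4 * Real.pi ^ 2 * t * ‖ξ‖ ^ 2 : ℝ) : ℂ))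

/-- `e^{itΔ} P f (x)`, realized for `f ∈ L²(ℝ²)` as the convolution of `f` with the
(rapidly decreasing) kernel of `e^{itΔ} P`. -/
def schrodingerProp (φ : E2 → ℂ) (t : ℝ) (f : E2 → ℂ) (x : E2) : ℂ :=
  ∫ y : E2, schrodingerKernel φ t (x - y) * f y

/-- The mixed norm `‖u‖_{L^q_t L^r_x(ℝ×ℝ²)}`, with the usual modification when `q = ∞`. -/
def mixedNorm (q r : ℝ≥0∞) (u : ℝ → E2 → ℂ) : ℝ≥0∞ :=
  if q = ⊤ then essSup (fun t => eLpNorm (u t) r volume) volume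
  else (∫⁻ t : ℝ, (eLpNorm (u t) r volume) ^ q.toReal) ^ (1 / q.toReal)

/-!
Regularising the symbol `e^{-4π²it|ξ|²}` to a Gaussian shows that `e^{itΔ}` maps `L¹` to `L^∞` with
norm `O(|t|^{-d/2})`. Since it is unitary on `L²`, complex interpolation gives decay `O(|t|^{-2/q})`
from `L^{r'}` to `L^r`. In the `TT*` argument, `u = e^{itΔ} f` is paired in space-time with its dual
function `‖u‖^{r-2} u`, suitably weighted in time. This is a pairing of `f` with a superposition of
evolved functions, and the square of the norm of that superposition is a bilinear form with kernel
`|s - t|^{-2/q}`. As `q > 2`, the exponent is less than `1` and the Hardy–Littlewood–Sobolev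
inequality in time bounds the form. Truncating the dual function and the time weight keeps every
quantity finite, and Fatou's lemma removes the truncation.
-/

local notation "L²[" E "]" => Lp ℂ 2 (volume : Measure E)

section HardyLittlewoodSobolev

open Set

lemma lintegral_comp_abs (g : ℝ → ℝ≥0∞) : ∫⁻ x : ℝ, g |x| = 2 * ∫⁻ x in Ioi (0 : ℝ), g x := by
  have h_pos : ∫⁻ x in Ioi (0 : ℝ), g |x| = ∫⁻ x in Ioi (0 : ℝ), g x :=
    setLIntegral_congr_fun measurableSet_Ioi fun x hx => by rw [abs_of_pos hx]
  have h_neg : ∫⁻ x in Iio (0 : ℝ), g |x| = ∫⁻ x in Ioi (0 : ℝ), g |x| := by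
    rw [← (Measure.measurePreserving_neg (volume : Measure ℝ)).setLIntegral_comp_preimage_emb
      (MeasurableEquiv.neg ℝ).measurableEmbedding]
    simp
  rw [← lintegral_add_compl _ (measurableSet_Ioi (a := (0 : ℝ))), compl_Ioi,
    ← setLIntegral_congr (Iio_ae_eq_Iic (a := (0 : ℝ))), h_neg, h_pos, two_mul]

lemma setLIntegral_comp_abs_sub {A : Set ℝ} (hA : MeasurableSet A) (g : ℝ → ℝ≥0∞) (s : ℝ) :
    ∫⁻ t in {t | |s - t| ∈ A}, g |s - t| = 2 * ∫⁻ x in A ∩ Ioi 0, g x := by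
  have hA' : MeasurableSet {t | |s - t| ∈ A} := by
    exact (measurable_const.sub measurable_id).abs hA
  rw [← lintegral_indicator hA', ← Measure.restrict_restrict hA, ← lintegral_indicator hA,
    ← lintegral_comp_abs, ← lintegral_sub_left_eq_self (fun x => A.indicator g |x|) s]
  rfl

lemma lintegral_near_rpow_abs_sub {l R : ℝ} (hl : l < 1) (hR : 0 ≤ R) (s : ℝ) :
    ∫⁻ t in {t | |s - t| ∈ Iic R}, ENNReal.ofReal (|s - t| ^ (-l)) =
      2 * ENNReal.ofReal (R ^ (1 - l) / (1 - l)) := by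
  have h_int : IntervalIntegrable (fun x : ℝ => x ^ (-l)) volume 0 R :=
    intervalIntegral.intervalIntegrable_rpow' (by linarith)
  rw [setLIntegral_comp_abs_sub measurableSet_Iic (fun x => ENNReal.ofReal (x ^ (-l))),
    Iic_inter_Ioi, ← ofReal_integral_eq_lintegral_ofReal h_int.1,
    ← intervalIntegral.integral_of_le hR, integral_rpow (Or.inl (by linarith)),
    Real.zero_rpow (by linarith), sub_zero, neg_add_eq_sub]
  filter_upwards [ae_restrict_mem measurableSet_Ioc] with x hx
  exact Real.rpow_nonneg hx.1.le _

lemma lintegral_far_rpow_abs_sub {a R : ℝ} (ha : 1 < a) (hR : 0 < R) (s : ℝ) :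
    ∫⁻ t in {t | |s - t| ∈ Ioi R}, ENNReal.ofReal (|s - t| ^ (-a)) =
      2 * ENNReal.ofReal (R ^ (1 - a) / (a - 1)) := by
  rw [setLIntegral_comp_abs_sub measurableSet_Ioi (fun x => ENNReal.ofReal (x ^ (-a))),
    Ioi_inter_Ioi, sup_of_le_left hR.le, ← ofReal_integral_eq_lintegral_ofReal
      (integrableOn_Ioi_rpow_of_lt (by linarith) hR), integral_Ioi_rpow_of_lt (by linarith) hR]
  · rw [neg_add_eq_sub, ← neg_sub a 1, div_neg, neg_div, neg_neg]
  · filter_upwards [ae_restrict_mem measurableSet_Ioi] with x hx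
    exact Real.rpow_nonneg (hR.le.trans (le_of_lt hx)) _

lemma lintegral_far_rpow_abs_sub_rpow_two_div {l R : ℝ} (hl : 0 < l) (hR : 0 < R) (s : ℝ) :
    ∫⁻ t in {t | |s - t| ∈ Ioi R}, ENNReal.ofReal (|s - t| ^ (-l)) ^ (2 / l) =
      2 * ENNReal.ofReal R⁻¹ := by
  have hR_inv : R⁻¹ = R ^ (1 - 2 : ℝ) / (2 - 1) := by norm_num [Real.rpow_neg_one]
  have h_far : MeasurableSet {t | |s - t| ∈ Ioi R} :=
    (measurable_const.sub measurable_id).abs measurableSet_Ioi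
  rw [hR_inv, ← lintegral_far_rpow_abs_sub one_lt_two hR s]
  refine setLIntegral_congr_fun h_far fun t ht => ?_
  have h_pos : 0 < |s - t| := hR.trans ht
  rw [ENNReal.ofReal_rpow_of_pos (by positivity), ← Real.rpow_mul h_pos.le]
  congr 2
  field_simp

lemma lintegral_lintegral_le_two_mul_of_symm {α : Type*} [MeasurableSpace α] {μ : Measure α}
    [SFinite μ] {k : α → α → ℝ≥0∞} (hk : Measurable (Function.uncurry k))
    (hk_symm : ∀ x y, k x y = k y x) {φ : α → ℝ≥0∞} (hφ : Measurable φ) :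
    ∫⁻ x, ∫⁻ y, k x y ∂μ ∂μ ≤ 2 * ∫⁻ x, ∫⁻ y in {y | φ y ≤ φ x}, k x y ∂μ ∂μ := by
  set A : α → α → ℝ≥0∞ := fun x => {y | φ y ≤ φ x}.indicator (k x)
  have h_le (x : α) : MeasurableSet {y | φ y ≤ φ x} := measurableSet_le hφ measurable_const
  have hA : Measurable (Function.uncurry A) :=
    hk.indicator (measurableSet_le (hφ.comp measurable_snd) (hφ.comp measurable_fst))
  have hk_le (x y : α) : k x y ≤ A x y + A y x := by
    rcases le_total (φ y) (φ x) with h | h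
    · exact le_add_right (by simp [A, h])
    · exact le_add_left (by simp [A, h, hk_symm x y])
  calc ∫⁻ x, ∫⁻ y, k x y ∂μ ∂μ
      ≤ ∫⁻ x, ∫⁻ y, (A x y + A y x) ∂μ ∂μ :=
        lintegral_mono fun x => lintegral_mono fun y => hk_le x y
    _ = (∫⁻ x, ∫⁻ y, A x y ∂μ ∂μ) + ∫⁻ x, ∫⁻ y, A y x ∂μ ∂μ := by
        have h_meas : Measurable fun x => ∫⁻ y, A x y ∂μ := hA.lintegral_prod_right'
        rw [← lintegral_add_left h_meas]
        exact lintegral_congr fun x => lintegral_add_left hA.of_uncurry_left _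
    _ = 2 * ∫⁻ x, ∫⁻ y, A x y ∂μ ∂μ := by
        rw [two_mul, lintegral_lintegral_swap (f := fun x y => A y x)
          (hA.comp measurable_swap).aemeasurable]
    _ = 2 * ∫⁻ x, ∫⁻ y in {y | φ y ≤ φ x}, k x y ∂μ ∂μ := by
        simp_rw [A, lintegral_indicator (h_le _)]

variable {l : ℝ} {φ : ℝ → ℝ≥0∞}

lemma setLIntegral_riesz_potential_le_near_add_far (hl : 0 < l) (hl1 : l < 1) (hφ : Measurable φ)
    {R : ℝ} (hR : 0 < R) (s : ℝ) :
    ∫⁻ t in {t | φ t ≤ φ s}, φ t * ENNReal.ofReal (|s - t| ^ (-l)) ≤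
      φ s * (2 * ENNReal.ofReal (R ^ (1 - l) / (1 - l))) +
        (∫⁻ t, φ t ^ (2 / (2 - l))) ^ ((2 - l) / 2) * (2 * ENNReal.ofReal R⁻¹) ^ (l / 2) := by
  have h2 : 0 < 2 - l := by linarith
  have h_holder : (2 / (2 - l)).HolderConjugate (2 / l) := by
    rw [Real.holderConjugate_iff, lt_div_iff₀ h2]
    exact ⟨by linarith, by field_simp; ring⟩
  set k : ℝ → ℝ≥0∞ := fun t => ENNReal.ofReal (|s - t| ^ (-l))
  have hk_meas : Measurable k := by fun_prop
  set near : Set ℝ := {t | |s - t| ∈ Iic R}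
  set far : Set ℝ := {t | |s - t| ∈ Ioi R}
  have h_near : MeasurableSet near := (measurable_const.sub measurable_id).abs measurableSet_Iic
  have h_far : nearᶜ = far := by
    ext t
    simp [near, far]
  have hk_rpow : ∫⁻ t in far, k t ^ (2 / l) = 2 * ENNReal.ofReal R⁻¹ :=
    lintegral_far_rpow_abs_sub_rpow_two_div hl hR s
  rw [← lintegral_inter_add_sdiff _ _ h_near]
  gcongr
  · calc ∫⁻ t in {t | φ t ≤ φ s} ∩ near, φ t * k t
        ≤ ∫⁻ t in {t | φ t ≤ φ s} ∩ near, φ s * k t :=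
        setLIntegral_mono' ((measurableSet_le hφ measurable_const).inter h_near)
          fun t ht => by gcongr; exact ht.1
      _ ≤ ∫⁻ t in near, φ s * k t := lintegral_mono_set inter_subset_right
      _ = φ s * (2 * ENNReal.ofReal (R ^ (1 - l) / (1 - l))) := by
        rw [lintegral_const_mul _ hk_meas, lintegral_near_rpow_abs_sub hl1 hR.le]
  · calc ∫⁻ t in {t | φ t ≤ φ s} \ near, φ t * k t
        ≤ ∫⁻ t in far, φ t * k t := lintegral_mono_set (h_far ▸ sdiff_subset_compl _ _)
      _ ≤ (∫⁻ t in far, φ t ^ (2 / (2 - l))) ^ (1 / (2 / (2 - l))) *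
            (∫⁻ t in far, k t ^ (2 / l)) ^ (1 / (2 / l)) :=
        ENNReal.lintegral_mul_le_Lp_mul_Lq _ h_holder hφ.aemeasurable hk_meas.aemeasurable
      _ ≤ (∫⁻ t, φ t ^ (2 / (2 - l))) ^ ((2 - l) / 2) * (2 * ENNReal.ofReal R⁻¹) ^ (l / 2) := by
        rw [hk_rpow, one_div_div, one_div_div]
        gcongr
        exact Measure.restrict_le_self

lemma near_add_far_eq_at_optimal_radius {x m : ℝ} (hl : 0 < l) (hl1 : l < 1) (hx : 0 < x)
    (hm : 0 < m) :
    x * (2 * ((m / x ^ (2 / (2 - l))) ^ (1 - l) / (1 - l))) +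
        m ^ ((2 - l) / 2) * (2 * (m / x ^ (2 / (2 - l)))⁻¹) ^ (l / 2) =
      (2 / (1 - l) + 2 ^ (l / 2)) * (m ^ (1 - l) * x ^ (l / (2 - l))) := by
  have h2 : 2 - l ≠ 0 := by linarith
  have h_near : x * (m / x ^ (2 / (2 - l))) ^ (1 - l) = m ^ (1 - l) * x ^ (l / (2 - l)) := by
    have h_exp : 2 / (2 - l) * (1 - l) = 1 - l / (2 - l) := by
      field_simp
      ring
    rw [Real.div_rpow hm.le (by positivity), ← Real.rpow_mul hx.le, h_exp, Real.rpow_sub hx,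
      Real.rpow_one]
    field_simp
  have h_far : m ^ ((2 - l) / 2) * (2 * (m / x ^ (2 / (2 - l)))⁻¹) ^ (l / 2) =
      2 ^ (l / 2) * (m ^ (1 - l) * x ^ (l / (2 - l))) := by
    have h_exp : 2 / (2 - l) * (l / 2) = l / (2 - l) := by field_simp
    have h_exp' : (1 - l) = (2 - l) / 2 - l / 2 := by ring
    rw [inv_div, Real.mul_rpow zero_le_two (by positivity), Real.div_rpow (by positivity) hm.le,
      ← Real.rpow_mul hx.le, h_exp, h_exp', Real.rpow_sub hm]
    field_simp
  rw [h_far, add_mul, ← h_near]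
  ring

lemma setLIntegral_riesz_potential_le (hl : 0 < l) (hl1 : l < 1) (hφ : Measurable φ)
    (hφ_top : ∀ t, φ t ≠ ⊤) (hM : ∫⁻ t, φ t ^ (2 / (2 - l)) ≠ ⊤) (s : ℝ) :
    ∫⁻ t in {t | φ t ≤ φ s}, φ t * ENNReal.ofReal (|s - t| ^ (-l)) ≤
      ENNReal.ofReal (2 / (1 - l) + 2 ^ (l / 2)) *
        ((∫⁻ t, φ t ^ (2 / (2 - l))) ^ (1 - l) * φ s ^ (l / (2 - l))) := by
  have h2 : 0 < 2 - l := by linarith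
  rcases eq_or_ne (φ s) 0 with hs | hs
  · rw [setLIntegral_congr_fun (g := 0) (measurableSet_le hφ measurable_const) fun t ht => by
      simp [nonpos_iff_eq_zero.mp (hs ▸ ht : φ t ≤ 0)]]
    simp
  rcases eq_or_ne (∫⁻ t, φ t ^ (2 / (2 - l))) 0 with hM0 | hM0
  · rw [lintegral_eq_zero_iff (hφ.pow_const _)] at hM0
    rw [setLIntegral_congr_fun_ae (g := 0) (measurableSet_le hφ measurable_const) (by
      filter_upwards [hM0] with t ht _
      simp [(ENNReal.rpow_eq_zero_iff_of_pos (by positivity)).mp ht])]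
    simp
  set M := ∫⁻ t, φ t ^ (2 / (2 - l))
  set x := (φ s).toReal
  set m := M.toReal
  have hx : 0 < x := ENNReal.toReal_pos hs (hφ_top s)
  have hm : 0 < m := ENNReal.toReal_pos hM0 hM
  have hx_eq : φ s = ENNReal.ofReal x := (ENNReal.ofReal_toReal (hφ_top s)).symm
  have hM_eq : M = ENNReal.ofReal m := (ENNReal.ofReal_toReal hM).symm
  set R := m / x ^ (2 / (2 - l)) with hR
  have hR_pos : 0 < R := by positivity
  calc ∫⁻ t in {t | φ t ≤ φ s}, φ t * ENNReal.ofReal (|s - t| ^ (-l))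
      ≤ φ s * (2 * ENNReal.ofReal (R ^ (1 - l) / (1 - l))) +
          M ^ ((2 - l) / 2) * (2 * ENNReal.ofReal R⁻¹) ^ (l / 2) :=
        setLIntegral_riesz_potential_le_near_add_far hl hl1 hφ hR_pos s
    _ = ENNReal.ofReal (x * (2 * (R ^ (1 - l) / (1 - l))) +
          m ^ ((2 - l) / 2) * (2 * R⁻¹) ^ (l / 2)) := by
        rw [hx_eq, hM_eq, ENNReal.ofReal_add (by positivity) (by positivity),
          ENNReal.ofReal_mul hx.le, ENNReal.ofReal_mul zero_le_two,
          ENNReal.ofReal_mul (by positivity), ← ENNReal.ofReal_rpow_of_pos hm,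
          ← ENNReal.ofReal_rpow_of_pos (by positivity), ENNReal.ofReal_mul zero_le_two,
          ENNReal.ofReal_ofNat]
    _ = ENNReal.ofReal (2 / (1 - l) + 2 ^ (l / 2)) * (M ^ (1 - l) * φ s ^ (l / (2 - l))) := by
        rw [hR, near_add_far_eq_at_optimal_radius hl hl1 hx hm, hx_eq, hM_eq,
          ENNReal.ofReal_mul (by positivity), ENNReal.ofReal_mul (by positivity),
          ENNReal.ofReal_rpow_of_pos hx, ENNReal.ofReal_rpow_of_pos hm]

/-- Hardy–Littlewood–Sobolev on the diagonal. Restricting to `φ t ≤ φ s` allows the Riesz potential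
at `s` to be split at a radius that depends on `φ s` alone. -/
theorem lintegral_lintegral_mul_rpow_abs_sub_le (hl : 0 < l) (hl1 : l < 1) (hφ : Measurable φ)
    (hφ_top : ∀ t, φ t ≠ ⊤) (hM : ∫⁻ t, φ t ^ (2 / (2 - l)) ≠ ⊤) :
    ∫⁻ s, ∫⁻ t, φ s * φ t * ENNReal.ofReal (|s - t| ^ (-l)) ≤
      2 * (ENNReal.ofReal (2 / (1 - l) + 2 ^ (l / 2)) *
        (∫⁻ t, φ t ^ (2 / (2 - l))) ^ (2 - l)) := by
  have h2 : 0 < 2 - l := by linarith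
  set M := ∫⁻ t, φ t ^ (2 / (2 - l)) with hM_def
  set K := ENNReal.ofReal (2 / (1 - l) + 2 ^ (l / 2))
  refine (lintegral_lintegral_le_two_mul_of_symm (by fun_prop) (fun s t => by
    rw [mul_comm (φ s), abs_sub_comm]) hφ).trans ?_
  gcongr
  calc ∫⁻ s, ∫⁻ t in {t | φ t ≤ φ s}, φ s * φ t * ENNReal.ofReal (|s - t| ^ (-l))
      = ∫⁻ s, φ s * ∫⁻ t in {t | φ t ≤ φ s}, φ t * ENNReal.ofReal (|s - t| ^ (-l)) := by
        simp_rw [mul_assoc]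
        exact lintegral_congr fun s => lintegral_const_mul' _ _ (hφ_top s)
    _ ≤ ∫⁻ s, K * M ^ (1 - l) * φ s ^ (2 / (2 - l)) := by
        refine lintegral_mono fun s => ?_
        have h_exp : 2 / (2 - l) = 1 + l / (2 - l) := by
          field_simp
          ring
        rw [h_exp, ENNReal.rpow_add_of_nonneg _ _ zero_le_one (by positivity), ENNReal.rpow_one,
          mul_left_comm, mul_assoc K]
        gcongr
        exact setLIntegral_riesz_potential_le hl hl1 hφ hφ_top hM s
    _ = K * M ^ (2 - l) := by
        have h_exp : 2 - l = (1 - l) + 1 := by ring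
        rw [lintegral_const_mul _ (hφ.pow_const _), ← hM_def, h_exp,
          ENNReal.rpow_add_of_nonneg _ _ (by linarith) zero_le_one, ENNReal.rpow_one, mul_assoc]

end HardyLittlewoodSobolev

section ComplexInterpolation

open Filter Topology
open scoped ComplexConjugate

lemma norm_ofReal_norm_cpow_sub_one_mul (a z : ℂ) :
    ‖(‖a‖ : ℂ) ^ (z - 1) * a‖ = ‖a‖ ^ (z.re - 1) * ‖a‖ := by
  rcases eq_or_ne a 0 with rfl | ha
  · simp
  · rw [norm_mul, norm_cpow_eq_rpow_re_of_pos (norm_pos_iff.mpr ha), sub_re, one_re]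

lemma norm_ofReal_norm_cpow_sub_one_mul_eq_rpow (a : ℂ) {z : ℂ} (hz : 0 < z.re) :
    ‖(‖a‖ : ℂ) ^ (z - 1) * a‖ = ‖a‖ ^ z.re := by
  rw [norm_ofReal_norm_cpow_sub_one_mul,
    ← Real.rpow_add_one' (norm_nonneg a) (by simpa using hz.ne'), sub_add_cancel]

lemma conj_ofReal_cpow_conj_sub_one {x : ℝ} (hx : 0 ≤ x) (z : ℂ) :
    conj ((x : ℂ) ^ (conj z - 1)) = (x : ℂ) ^ (z - 1) := by
  have h_arg : (x : ℂ).arg ≠ Real.pi := by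
    rw [arg_ofReal_of_nonneg hx]
    exact Real.pi_ne_zero.symm
  rw [← map_one conj, ← map_sub, ← conj_cpow _ _ h_arg, conj_ofReal, map_one]

variable {X : Type*} [MeasurableSpace X] {μ : Measure X}

lemma L2_norm_sq_eq_integral (F : Lp ℂ 2 μ) : ‖F‖ ^ 2 = ∫ x, ‖F x‖ ^ 2 ∂μ := by
  have h_inner : inner ℂ F F = ((∫ x, ‖F x‖ ^ 2 ∂μ : ℝ) : ℂ) := by
    rw [L2.inner_def, ← integral_complex_ofReal]
    simp_rw [inner_self_eq_norm_sq_to_K]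
    norm_cast
  rw [inner_self_eq_norm_sq_to_K] at h_inner
  exact ofReal_injective (by simpa using h_inner)

/-- The `L²` class of `‖f‖ ^ (z - 1) * f` for a simple function `f`: the analytic family through `f`
used in complex interpolation. It is written as a sum over the non-zero values of `f`, which makes
the dependence on `z` explicit. -/
def analyticFamily {f : SimpleFunc X ℂ} (hf : MemLp f 2 μ) (z : ℂ) : Lp ℂ 2 μ :=
  ∑ a ∈ f.range.erase 0,
    (‖a‖ : ℂ) ^ (z - 1) • (hf.indicator (f.measurableSet_fiber a)).toLp _

section AnalyticFamily

variable {f : SimpleFunc X ℂ} (hf : MemLp f 2 μ)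

lemma coeFn_analyticFamily (z : ℂ) :
    analyticFamily hf z =ᵐ[μ] fun x => (‖f x‖ : ℂ) ^ (z - 1) * f x := by
  classical
  have h_term : ∀ᵐ x ∂μ, ∀ a ∈ f.range.erase 0,
      ((‖a‖ : ℂ) ^ (z - 1) • (hf.indicator (f.measurableSet_fiber a)).toLp _) x =
        (‖a‖ : ℂ) ^ (z - 1) * (f ⁻¹' {a}).indicator f x := by
    rw [eventually_all_finset]
    intro a _
    filter_upwards [Lp.coeFn_smul ((‖a‖ : ℂ) ^ (z - 1))
      ((hf.indicator (f.measurableSet_fiber a)).toLp _),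
      (hf.indicator (f.measurableSet_fiber a)).coeFn_toLp] with x h_smul h_coe
    rw [h_smul, Pi.smul_apply, h_coe, smul_eq_mul]
  filter_upwards [h_term, Lp.coeFn_fun_finsetSum (f.range.erase 0) fun a =>
    (‖a‖ : ℂ) ^ (z - 1) • (hf.indicator (f.measurableSet_fiber a)).toLp _] with x hx h_sum
  rw [analyticFamily, h_sum, Finset.sum_congr rfl hx, Finset.sum_eq_single (f x)]
  · simp
  · intro a _ ha
    simp [ha.symm]
  · intro h
    have h_zero : f x = 0 := by simpa using h
    simp [h_zero]

lemma analyticFamily_one : analyticFamily hf 1 = hf.toLp f := by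
  refine Lp.ext ((coeFn_analyticFamily hf 1).trans (.trans ?_ hf.coeFn_toLp.symm))
  simp

lemma differentiable_analyticFamily : Differentiable ℂ (analyticFamily hf) := by
  refine Differentiable.fun_sum fun a ha => ?_
  have h_ne : (‖a‖ : ℂ) ≠ 0 := by simpa using (Finset.mem_erase.mp ha).1
  exact ((differentiable_id.sub_const 1).const_cpow (.inl h_ne)).smul_const _

lemma differentiable_inner_analyticFamily_conj {F : ℂ → Lp ℂ 2 μ} (hF : Differentiable ℂ F) :
    Differentiable ℂ fun z => inner ℂ (analyticFamily hf (conj z)) (F z) := by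
  simp only [analyticFamily, sum_inner, inner_smul_left,
    conj_ofReal_cpow_conj_sub_one (norm_nonneg _)]
  refine Differentiable.fun_sum fun a ha => ?_
  have h_ne : (‖a‖ : ℂ) ≠ 0 := by simpa using (Finset.mem_erase.mp ha).1
  exact ((differentiable_id.sub_const 1).const_cpow (.inl h_ne)).mul
    ((innerSL ℂ _).differentiable.comp hF)

lemma norm_analyticFamily_eq_norm_re (z : ℂ) :
    ‖analyticFamily hf z‖ = ‖analyticFamily hf z.re‖ := by
  rw [Lp.norm_def, Lp.norm_def]
  congr 1
  refine eLpNorm_congr_norm_ae ?_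
  filter_upwards [coeFn_analyticFamily hf z, coeFn_analyticFamily hf z.re] with x hx hx'
  rw [hx, hx', norm_ofReal_norm_cpow_sub_one_mul, norm_ofReal_norm_cpow_sub_one_mul, ofReal_re]

lemma exists_norm_analyticFamily_le (a b : ℝ) :
    ∃ C, ∀ z : ℂ, z.re ∈ Set.Icc a b → ‖analyticFamily hf z‖ ≤ C := by
  have h_cont : Continuous fun x : ℝ => ‖analyticFamily hf x‖ :=
    ((differentiable_analyticFamily hf).continuous.comp continuous_ofReal).norm
  obtain ⟨C, hC⟩ := isCompact_Icc.bddAbove_image (K := Set.Icc a b) h_cont.continuousOn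
  refine ⟨C, fun z hz => ?_⟩
  rw [norm_analyticFamily_eq_norm_re]
  exact hC (Set.mem_image_of_mem _ hz)

lemma integrable_analyticFamily (z : ℂ) : Integrable (analyticFamily hf z) μ := by
  have h_fin : f.FinMeasSupp μ :=
    (SimpleFunc.memLp_iff_finMeasSupp two_ne_zero ENNReal.ofNat_ne_top).mp hf
  exact (h_fin.map (g := fun a => (‖a‖ : ℂ) ^ (z - 1) * a) (by simp)).integrable.congr
    (coeFn_analyticFamily hf z).symm

lemma norm_sq_analyticFamily {p : ℝ} (hp : 0 < p) {z : ℂ} (hz : z.re = p / 2) :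
    ‖analyticFamily hf z‖ ^ 2 = ∫ x, ‖f x‖ ^ p ∂μ := by
  rw [L2_norm_sq_eq_integral]
  refine integral_congr_ae ?_
  filter_upwards [coeFn_analyticFamily hf z] with x hx
  rw [hx, norm_ofReal_norm_cpow_sub_one_mul_eq_rpow _ (by linarith), hz, ← Real.rpow_mul_natCast
    (norm_nonneg _)]
  congr 1
  push_cast
  ring

lemma integral_norm_analyticFamily {p : ℝ} (hp : 0 < p) {z : ℂ} (hz : z.re = p) :
    ∫ x, ‖analyticFamily hf z x‖ ∂μ = ∫ x, ‖f x‖ ^ p ∂μ := by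
  refine integral_congr_ae ?_
  filter_upwards [coeFn_analyticFamily hf z] with x hx
  rw [hx, norm_ofReal_norm_cpow_sub_one_mul_eq_rpow _ (by linarith), hz]

end AnalyticFamily

variable {Y : Type*} [MeasurableSpace Y] {ν : Measure Y} {T : Lp ℂ 2 μ →L[ℂ] Lp ℂ 2 ν}
  {M₀ M₁ p : ℝ}

lemma norm_inner_analyticFamily_le (hT : ‖T‖ ≤ M₀) {f : SimpleFunc X ℂ} {g : SimpleFunc Y ℂ}
    (hf : MemLp f 2 μ) (hg : MemLp g 2 ν) (w z : ℂ) :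
    ‖inner ℂ (analyticFamily hg w) (T (analyticFamily hf z))‖ ≤
      M₀ * (‖analyticFamily hf z‖ * ‖analyticFamily hg w‖) := by
  calc ‖inner ℂ (analyticFamily hg w) (T (analyticFamily hf z))‖
      ≤ ‖analyticFamily hg w‖ * ‖T (analyticFamily hf z)‖ := norm_inner_le_norm _ _
    _ ≤ ‖analyticFamily hg w‖ * (M₀ * ‖analyticFamily hf z‖) := by
      gcongr
      exact T.le_of_opNorm_le hT _
    _ = M₀ * (‖analyticFamily hf z‖ * ‖analyticFamily hg w‖) := by ring

lemma bddAbove_norm_inner_analyticFamily {f : SimpleFunc X ℂ} {g : SimpleFunc Y ℂ}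
    (hf : MemLp f 2 μ) (hg : MemLp g 2 ν) (a b : ℝ) :
    BddAbove ((norm ∘ fun z => inner ℂ (analyticFamily hg (conj z)) (T (analyticFamily hf z))) ''
      HadamardThreeLines.verticalClosedStrip a b) := by
  obtain ⟨A, hA⟩ := exists_norm_analyticFamily_le hf a b
  obtain ⟨B, hB⟩ := exists_norm_analyticFamily_le hg a b
  refine ⟨‖T‖ * (A * B), Set.forall_mem_image.mpr fun z hz =>
    (norm_inner_analyticFamily_le le_rfl hf hg _ z).trans ?_⟩
  have hA_nonneg : 0 ≤ A := (norm_nonneg _).trans (hA z hz)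
  gcongr
  exacts [hA z hz, hB _ (by rwa [conj_re])]

lemma norm_inner_simpleFunc_le_interpolate (hT : ‖T‖ ≤ M₀) (hM₁ : 0 ≤ M₁)
    (hT₁ : ∀ (F : Lp ℂ 2 μ) (G : Lp ℂ 2 ν), Integrable F μ → Integrable G ν →
      ‖inner ℂ G (T F)‖ ≤ M₁ * ((∫ x, ‖F x‖ ∂μ) * ∫ y, ‖G y‖ ∂ν))
    (hp : 1 ≤ p) (hp' : p ≤ 2) {f : SimpleFunc X ℂ} {g : SimpleFunc Y ℂ} (hf : MemLp f 2 μ)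
    (hg : MemLp g 2 ν) :
    ‖inner ℂ (hg.toLp g) (T (hf.toLp f))‖ ≤
      M₀ ^ (2 - 2 / p) * M₁ ^ (2 / p - 1) *
        ((∫ x, ‖f x‖ ^ p ∂μ) * ∫ y, ‖g y‖ ^ p ∂ν) ^ (1 / p) := by
  have hp0 : 0 < p := by linarith
  have hM₀ : 0 ≤ M₀ := (norm_nonneg T).trans hT
  set N := (∫ x, ‖f x‖ ^ p ∂μ) * ∫ y, ‖g y‖ ^ p ∂ν
  have hN : 0 ≤ N := by positivity
  set Φ : ℂ → ℂ := fun z => inner ℂ (analyticFamily hg (conj z)) (T (analyticFamily hf z))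
  have hΦ_diff : Differentiable ℂ Φ := differentiable_inner_analyticFamily_conj hg
    (T.differentiable.comp (differentiable_analyticFamily hf))
  have hΦ_left : ∀ z ∈ re ⁻¹' {p / 2}, ‖Φ z‖ ≤ M₀ * N ^ (1 / 2 : ℝ) := fun z hz => by
    refine (norm_inner_analyticFamily_le hT hf hg _ z).trans ?_
    gcongr
    rw [← Real.sqrt_eq_rpow]
    refine Real.le_sqrt_of_sq_le (le_of_eq ?_)
    rw [mul_pow, norm_sq_analyticFamily hf hp0 hz,
      norm_sq_analyticFamily hg hp0 ((conj_re z).trans hz)]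
  have hΦ_right : ∀ z ∈ re ⁻¹' {p}, ‖Φ z‖ ≤ M₁ * N := fun z hz => by
    refine (hT₁ _ _ (integrable_analyticFamily hf _) (integrable_analyticFamily hg _)).trans_eq ?_
    rw [integral_norm_analyticFamily hf hp0 hz,
      integral_norm_analyticFamily hg hp0 ((conj_re z).trans hz)]
  have h_one : (1 : ℂ) ∈ HadamardThreeLines.verticalClosedStrip (p / 2) p := by
    rw [HadamardThreeLines.verticalClosedStrip, Set.mem_preimage, one_re]
    exact ⟨by linarith, hp⟩
  have h_three_lines := HadamardThreeLines.norm_le_interp_of_mem_verticalClosedStrip'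
    (by linarith) h_one hΦ_diff.diffContOnCl (bddAbove_norm_inner_analyticFamily hf hg _ _)
    hΦ_left hΦ_right
  have h_exp : (1 - p / 2) / (p - p / 2) = 2 / p - 1 := by field_simp; ring
  have h_exp' : 1 - (2 / p - 1) = 2 - 2 / p := by ring
  have h_exp'' : 1 / 2 * (2 - 2 / p) + (2 / p - 1) = 1 / p := by ring
  simp only [Φ, map_one, analyticFamily_one, one_re, h_exp, h_exp'] at h_three_lines
  refine h_three_lines.trans_eq ?_
  rw [Real.mul_rpow hM₀ (by positivity), Real.mul_rpow hM₁ hN, ← Real.rpow_mul hN, mul_mul_mul_comm,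
    ← Real.rpow_add' hN (by rw [h_exp'']; positivity), h_exp'']

lemma Lp_exists_tendsto_simpleFunc (F : Lp ℂ 2 μ) :
    ∃ (f : ℕ → SimpleFunc X ℂ) (hf : ∀ n, MemLp (f n) 2 μ), (∀ n x, ‖f n x‖ ≤ 2 * ‖F x‖) ∧
      (∀ x, Tendsto (fun n => f n x) atTop (𝓝 (F x))) ∧
      Tendsto (fun n => (hf n).toLp (f n)) atTop (𝓝 F) := by
  have hF : Measurable F := (Lp.stronglyMeasurable F).measurable
  refine ⟨SimpleFunc.approxOn F hF (Set.range F ∪ {0}) 0 (by simp),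
    SimpleFunc.memLp_approxOn_range hF (Lp.memLp F), fun n x => ?_, fun x => ?_, ?_⟩
  · rw [two_mul]
    exact SimpleFunc.norm_approxOn_zero_le hF (by simp) x n
  · exact SimpleFunc.tendsto_approxOn hF (by simp) (subset_closure (by simp))
  · have h_tendsto := (Lp.tendsto_Lp_iff_tendsto_eLpNorm'' _
      (SimpleFunc.memLp_approxOn_range hF (Lp.memLp F)) _ (Lp.memLp F)).mpr
      (SimpleFunc.tendsto_approxOn_range_Lp_eLpNorm ENNReal.ofNat_ne_top hF (Lp.memLp F).2)
    rwa [Lp.toLp_coeFn] at h_tendsto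

lemma tendsto_integral_norm_rpow {F : X → ℂ} (hp : 0 < p) (hF : Integrable (fun x => ‖F x‖ ^ p) μ)
    {f : ℕ → SimpleFunc X ℂ} (hf_le : ∀ n x, ‖f n x‖ ≤ 2 * ‖F x‖)
    (hf : ∀ x, Tendsto (fun n => f n x) atTop (𝓝 (F x))) :
    Tendsto (fun n => ∫ x, ‖f n x‖ ^ p ∂μ) atTop (𝓝 (∫ x, ‖F x‖ ^ p ∂μ)) := by
  refine tendsto_integral_of_dominated_convergence (fun x => 2 ^ p * ‖F x‖ ^ p)
    (fun n => ((f n).aestronglyMeasurable.norm.aemeasurable.pow_const p).aestronglyMeasurable)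
    (hF.const_mul _) (fun n => ae_of_all _ fun x => ?_)
    (ae_of_all _ fun x => (hf x).norm.rpow_const (.inr hp.le))
  rw [Real.norm_of_nonneg (by positivity), ← Real.mul_rpow zero_le_two (norm_nonneg _)]
  exact Real.rpow_le_rpow (norm_nonneg _) (hf_le n x) hp.le

/-- Riesz–Thorin between `L¹ → L^∞` and `L² → L²`, in the bilinear form that avoids `L^∞`. -/
theorem norm_inner_le_interpolate (hT : ‖T‖ ≤ M₀) (hM₁ : 0 ≤ M₁)
    (hT₁ : ∀ (F : Lp ℂ 2 μ) (G : Lp ℂ 2 ν), Integrable F μ → Integrable G ν →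
      ‖inner ℂ G (T F)‖ ≤ M₁ * ((∫ x, ‖F x‖ ∂μ) * ∫ y, ‖G y‖ ∂ν))
    (hp : 1 ≤ p) (hp' : p ≤ 2) {F : Lp ℂ 2 μ} {G : Lp ℂ 2 ν}
    (hF : Integrable (fun x => ‖F x‖ ^ p) μ) (hG : Integrable (fun y => ‖G y‖ ^ p) ν) :
    ‖inner ℂ G (T F)‖ ≤ M₀ ^ (2 - 2 / p) * M₁ ^ (2 / p - 1) *
      ((∫ x, ‖F x‖ ^ p ∂μ) * ∫ y, ‖G y‖ ^ p ∂ν) ^ (1 / p) := by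
  have hp0 : 0 < p := by linarith
  obtain ⟨f, hf, hf_le, hf_pt, hf_lim⟩ := Lp_exists_tendsto_simpleFunc F
  obtain ⟨g, hg, hg_le, hg_pt, hg_lim⟩ := Lp_exists_tendsto_simpleFunc G
  refine le_of_tendsto_of_tendsto'
    (hg_lim.inner ((T.continuous.tendsto F).comp hf_lim)).norm ?_
    fun n => norm_inner_simpleFunc_le_interpolate hT hM₁ hT₁ hp hp' (hf n) (hg n)
  exact (((tendsto_integral_norm_rpow hp0 hF hf_le hf_pt).mul
    (tendsto_integral_norm_rpow hp0 hG hg_le hg_pt)).rpow_const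
      (.inr (by positivity))).const_mul _

end ComplexInterpolation

section TruncatedDuality

open Filter Topology

variable {n r : ℝ}

section Pointwise

lemma rpow_sub_rpow_mul_le {s a b : ℝ} (hs : 0 ≤ s) (ha : 0 ≤ a) (hab : a ≤ b) :
    (b ^ s - a ^ s) * a ≤ (s + 1) * b ^ s * (b - a) := by
  rcases ha.eq_or_lt with rfl | ha_pos
  · have : 0 ≤ b ^ s := Real.rpow_nonneg hab _
    rw [mul_zero, sub_zero]
    positivity
  have hb_pos : 0 < b := ha_pos.trans_le hab
  have h_bernoulli : 1 + (s + 1) * (a / b - 1) ≤ (a / b) ^ (s + 1) := by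
    simpa using one_add_mul_self_le_rpow_one_add (s := a / b - 1) (p := s + 1)
      (by linarith [div_nonneg ha hb_pos.le]) (by linarith)
  have h_mul : b ^ s * b + (s + 1) * b ^ s * (a - b) ≤ a ^ s * a := by
    rw [Real.div_rpow ha hb_pos.le, le_div_iff₀ (by positivity), Real.rpow_add_one hb_pos.ne',
      Real.rpow_add_one ha_pos.ne'] at h_bernoulli
    refine (le_of_eq ?_).trans h_bernoulli
    field_simp
  have h_mono : b ^ s * a ≤ b ^ s * b := by gcongr
  linarith

lemma rpow_sub_two_mul_rpow_le {a b : ℝ} (hr : 2 < r) (ha : 0 ≤ a) (hab : a ≤ b) :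
    (a ^ (r - 2) * b) ^ (r / (r - 1)) ≤ a ^ (r - 2) * b ^ 2 := by
  have hr1 : 0 < r - 1 := by linarith
  have hr2 : 0 < r - 2 := by linarith
  rcases ha.eq_or_lt with rfl | ha_pos
  · rw [Real.zero_rpow hr2.ne', zero_mul, zero_mul, Real.zero_rpow (by positivity)]
  have hb_pos : 0 < b := ha_pos.trans_le hab
  have h_split : (r - 2) * (r / (r - 1)) = (r - 2) + (r - 2) / (r - 1) := by
    field_simp
    ring
  calc (a ^ (r - 2) * b) ^ (r / (r - 1))
      = a ^ (r - 2) * (a ^ ((r - 2) / (r - 1)) * b ^ (r / (r - 1))) := by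
        rw [Real.mul_rpow (by positivity) hb_pos.le, ← Real.rpow_mul ha, h_split,
          Real.rpow_add ha_pos, mul_assoc]
    _ ≤ a ^ (r - 2) * (b ^ ((r - 2) / (r - 1)) * b ^ (r / (r - 1))) := by gcongr
    _ = a ^ (r - 2) * b ^ 2 := by
        rw [← Real.rpow_add hb_pos, ← Real.rpow_two]
        congr 2
        field_simp
        ring

variable {V : Type*} [NormedAddCommGroup V] [NormedSpace ℝ V]

/-- The map `z ↦ ‖z‖ ^ (r - 2) z`, which realises the duality between `L^r` and `L^(r/(r-1))`, with
its weight truncated at height `n` so that it is Lipschitz and acts on `L²`. -/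
def truncDuality (n r : ℝ) (z : V) : V := min ‖z‖ n ^ (r - 2) • z

lemma truncDuality_zero : truncDuality n r (0 : V) = 0 := smul_zero _

lemma norm_truncDuality (hn : 0 ≤ n) (z : V) :
    ‖truncDuality n r z‖ = min ‖z‖ n ^ (r - 2) * ‖z‖ := by
  rw [truncDuality, norm_smul, Real.norm_of_nonneg]
  exact Real.rpow_nonneg (le_min (norm_nonneg z) hn) _

lemma norm_truncDuality_sub_le (hn : 0 ≤ n) (hr : 2 < r) {z w : V} (hwz : ‖w‖ ≤ ‖z‖) :
    ‖truncDuality n r z - truncDuality n r w‖ ≤ n ^ (r - 2) * r * ‖z - w‖ := by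
  have hr2 : 0 < r - 2 := by linarith
  have hz : 0 ≤ min ‖z‖ n := le_min (norm_nonneg _) hn
  have h_mono : min ‖w‖ n ^ (r - 2) ≤ min ‖z‖ n ^ (r - 2) := by gcongr
  have h_le : min ‖z‖ n ^ (r - 2) ≤ n ^ (r - 2) := by
    gcongr
    exact min_le_right _ _
  have h_weights : (min ‖z‖ n ^ (r - 2) - min ‖w‖ n ^ (r - 2)) * ‖w‖ ≤
      (r - 1) * n ^ (r - 2) * ‖z - w‖ := by
    rcases le_total n ‖w‖ with h | h
    · rw [min_eq_right h, min_eq_right (h.trans hwz), sub_self, zero_mul]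
      have : 0 ≤ r - 1 := by linarith
      positivity
    · have h_sub : min ‖z‖ n - ‖w‖ ≤ ‖z - w‖ :=
        (sub_le_sub_right (min_le_left _ _) _).trans (norm_sub_norm_le z w)
      have h_sub_nonneg : 0 ≤ min ‖z‖ n - ‖w‖ := sub_nonneg.2 (le_min hwz h)
      rw [min_eq_left h]
      refine (rpow_sub_rpow_mul_le hr2.le (norm_nonneg w) (le_min hwz h)).trans ?_
      rw [show r - 2 + 1 = r - 1 by ring]
      have : 0 ≤ r - 1 := by linarith
      gcongr
  have h_split : truncDuality n r z - truncDuality n r w = min ‖z‖ n ^ (r - 2) • (z - w) +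
      (min ‖z‖ n ^ (r - 2) - min ‖w‖ n ^ (r - 2)) • w := by
    rw [truncDuality, truncDuality, smul_sub, sub_smul]
    abel
  calc ‖truncDuality n r z - truncDuality n r w‖
      ≤ min ‖z‖ n ^ (r - 2) * ‖z - w‖ +
          (min ‖z‖ n ^ (r - 2) - min ‖w‖ n ^ (r - 2)) * ‖w‖ := by
        rw [h_split]
        refine (norm_add_le _ _).trans_eq ?_
        rw [norm_smul, norm_smul, Real.norm_of_nonneg (Real.rpow_nonneg hz _),
          Real.norm_of_nonneg (sub_nonneg.2 h_mono)]
    _ ≤ n ^ (r - 2) * ‖z - w‖ + (r - 1) * n ^ (r - 2) * ‖z - w‖ := by gcongr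
    _ = n ^ (r - 2) * r * ‖z - w‖ := by ring

lemma lipschitzWith_truncDuality (hn : 0 ≤ n) (hr : 2 < r) :
    LipschitzWith (n ^ (r - 2) * r).toNNReal (truncDuality (V := V) n r) := by
  refine LipschitzWith.of_dist_le_mul fun z w => ?_
  rw [Real.coe_toNNReal _ (by positivity), dist_eq_norm, dist_eq_norm]
  rcases le_total ‖w‖ ‖z‖ with h | h
  · exact norm_truncDuality_sub_le hn hr h
  · rw [norm_sub_rev, norm_sub_rev z w]
    exact norm_truncDuality_sub_le hn hr h

end Pointwise

variable {X : Type*} [MeasurableSpace X] {μ : Measure X}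

/-- The truncated duality map acting on `L²(μ)`. -/
def truncDualityLp (hn : 0 ≤ n) (hr : 2 < r) (F : Lp ℂ 2 μ) : Lp ℂ 2 μ :=
  (lipschitzWith_truncDuality hn hr).compLp truncDuality_zero F

lemma coeFn_truncDualityLp (hn : 0 ≤ n) (hr : 2 < r) (F : Lp ℂ 2 μ) :
    (truncDualityLp hn hr F : X → ℂ) =ᵐ[μ] fun x => truncDuality n r (F x) :=
  (lipschitzWith_truncDuality hn hr).coeFn_compLp truncDuality_zero F

lemma continuous_truncDualityLp (hn : 0 ≤ n) (hr : 2 < r) :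
    Continuous (truncDualityLp (μ := μ) hn hr) :=
  (lipschitzWith_truncDuality hn hr).continuous_compLp truncDuality_zero

/-- The `r`-th moment `∫ ‖F‖ ^ r` with `r - 2` of its powers truncated at height `n`, so that it is
finite for every `F` in `L²(μ)`. -/
def truncMoment (n r : ℝ) (F : Lp ℂ 2 μ) : ℝ := ∫ x, min ‖F x‖ n ^ (r - 2) * ‖F x‖ ^ 2 ∂μ

lemma integrable_rpow_min_norm_mul_sq (hn : 0 ≤ n) (hr : 2 < r) (F : Lp ℂ 2 μ) :
    Integrable (fun x => min ‖F x‖ n ^ (r - 2) * ‖F x‖ ^ 2) μ := by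
  have h_sq : Integrable (fun x => ‖F x‖ ^ 2) μ :=
    (memLp_two_iff_integrable_sq_norm (Lp.aestronglyMeasurable F)).1 (Lp.memLp F)
  have h_meas : Measurable F := (Lp.stronglyMeasurable F).measurable
  refine (h_sq.const_mul (n ^ (r - 2))).mono' (by fun_prop) (.of_forall fun x => ?_)
  rw [Real.norm_of_nonneg (by positivity)]
  gcongr
  exact min_le_right _ _

lemma truncMoment_nonneg (hn : 0 ≤ n) (F : Lp ℂ 2 μ) : 0 ≤ truncMoment n r F :=
  integral_nonneg fun _ => by positivity

lemma inner_truncDualityLp_self (hn : 0 ≤ n) (hr : 2 < r) (F : Lp ℂ 2 μ) :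
    inner ℂ (truncDualityLp hn hr F) F = (truncMoment n r F : ℂ) := by
  rw [L2.inner_def, truncMoment, ← integral_complex_ofReal]
  refine integral_congr_ae ?_
  filter_upwards [coeFn_truncDualityLp hn hr F] with x hx
  rw [hx, truncDuality, real_smul, ← smul_eq_mul, inner_smul_left, inner_self_eq_norm_sq_to_K,
    Complex.conj_ofReal]
  push_cast
  rfl

lemma continuous_truncMoment (hn : 0 ≤ n) (hr : 2 < r) : Continuous (truncMoment (μ := μ) n r) := by
  have h_inner := (continuous_truncDualityLp (μ := μ) hn hr).inner (𝕜 := ℂ) continuous_id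
  refine (Complex.continuous_re.comp h_inner).congr fun F => ?_
  rw [Function.comp_apply, id, inner_truncDualityLp_self, Complex.ofReal_re]

lemma norm_truncDualityLp_rpow_le (hn : 0 ≤ n) (hr : 2 < r) (F : Lp ℂ 2 μ) :
    ∀ᵐ x ∂μ, ‖truncDualityLp hn hr F x‖ ^ (r / (r - 1)) ≤ min ‖F x‖ n ^ (r - 2) * ‖F x‖ ^ 2 := by
  filter_upwards [coeFn_truncDualityLp hn hr F] with x hx
  rw [hx, norm_truncDuality hn]
  exact rpow_sub_two_mul_rpow_le hr (le_min (norm_nonneg _) hn) (min_le_left _ _)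

lemma integrable_norm_truncDualityLp_rpow (hn : 0 ≤ n) (hr : 2 < r) (F : Lp ℂ 2 μ) :
    Integrable (fun x => ‖truncDualityLp hn hr F x‖ ^ (r / (r - 1))) μ := by
  have h_meas : Measurable (truncDualityLp hn hr F) := (Lp.stronglyMeasurable _).measurable
  refine (integrable_rpow_min_norm_mul_sq hn hr F).mono'
    (h_meas.norm.pow_const _).aestronglyMeasurable ?_
  filter_upwards [norm_truncDualityLp_rpow_le hn hr F] with x hx
  rwa [Real.norm_of_nonneg (by positivity)]

lemma integral_norm_truncDualityLp_rpow_le (hn : 0 ≤ n) (hr : 2 < r) (F : Lp ℂ 2 μ) :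
    ∫ x, ‖truncDualityLp hn hr F x‖ ^ (r / (r - 1)) ∂μ ≤ truncMoment n r F :=
  integral_mono_ae (integrable_norm_truncDualityLp_rpow hn hr F)
    (integrable_rpow_min_norm_mul_sq hn hr F) (norm_truncDualityLp_rpow_le hn hr F)

lemma tendsto_ofReal_rpow_min_norm_mul_sq (hr : 2 < r) (z : ℂ) :
    Tendsto (fun n : ℕ => ENNReal.ofReal (min ‖z‖ n ^ (r - 2) * ‖z‖ ^ 2)) atTop
      (𝓝 (‖z‖ₑ ^ r)) := by
  refine tendsto_const_nhds.congr' ?_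
  obtain ⟨N, hN⟩ := exists_nat_ge ‖z‖
  filter_upwards [eventually_ge_atTop N] with n hn
  rw [min_eq_left (hN.trans (Nat.cast_le.2 hn)), ← ofReal_norm,
    ENNReal.ofReal_rpow_of_nonneg (norm_nonneg _) (by linarith), ← Real.rpow_two,
    ← Real.rpow_add_of_nonneg (norm_nonneg z) (by linarith) zero_le_two, sub_add_cancel]

lemma tendsto_ofReal_truncMoment (hr : 2 < r) (F : Lp ℂ 2 μ) :
    Tendsto (fun n : ℕ => ENNReal.ofReal (truncMoment n r F)) atTop
      (𝓝 (∫⁻ x, ‖F x‖ₑ ^ r ∂μ)) := by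
  have h_lintegral (n : ℕ) : ENNReal.ofReal (truncMoment n r F) =
      ∫⁻ x, ENNReal.ofReal (min ‖F x‖ n ^ (r - 2) * ‖F x‖ ^ 2) ∂μ :=
    ofReal_integral_eq_lintegral_ofReal (integrable_rpow_min_norm_mul_sq n.cast_nonneg hr F)
      (.of_forall fun x => by positivity)
  simp_rw [h_lintegral]
  refine lintegral_tendsto_of_tendsto_of_monotone (fun n => by fun_prop)
    (.of_forall fun x a b hab => ENNReal.ofReal_le_ofReal ?_)
    (.of_forall fun x => tendsto_ofReal_rpow_min_norm_mul_sq hr (F x))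
  gcongr

end TruncatedDuality

section HilbertSpace

variable {𝕜 H : Type*} [RCLike 𝕜] [NormedAddCommGroup H] [InnerProductSpace 𝕜 H]

lemma continuous_of_norm_eq_of_continuous_inner {τ : Type*} [TopologicalSpace τ] {v : τ → H}
    {c : ℝ} (h_norm : ∀ t, ‖v t‖ = c) (h_inner : ∀ g, Continuous fun t => inner 𝕜 g (v t)) :
    Continuous v := by
  refine continuous_iff_continuousAt.2 fun s => tendsto_iff_norm_sub_tendsto_zero.2 ?_
  have h_sq (t : τ) : ‖v t - v s‖ ^ 2 = 2 * c ^ 2 - 2 * RCLike.re (inner 𝕜 (v s) (v t)) := by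
    rw [norm_sub_sq (𝕜 := 𝕜), h_norm, h_norm, inner_re_symm]
    ring
  have h_cont : Continuous fun t => √(‖v t - v s‖ ^ 2) := by
    simp_rw [h_sq]
    fun_prop
  simpa [Real.sqrt_sq] using h_cont.tendsto s

lemma enorm_integral_sq_le_lintegral_enorm_inner [CompleteSpace H] [NormedSpace ℝ H]
    {X : Type*} [MeasurableSpace X] {μ : Measure X} {W : X → H} (hW : Integrable W μ) :
    ‖∫ t, W t ∂μ‖ₑ ^ 2 ≤ ∫⁻ s, ∫⁻ t, ‖inner 𝕜 (W s) (W t)‖ₑ ∂μ ∂μ := by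
  set V := ∫ t, W t ∂μ
  calc ‖V‖ₑ ^ 2 = ‖∫ s, inner 𝕜 V (W s) ∂μ‖ₑ := by
        rw [integral_inner hW, ← ofReal_norm, ← ofReal_norm, inner_self_eq_norm_sq_to_K, norm_pow,
          RCLike.norm_ofReal, abs_norm, ENNReal.ofReal_pow (norm_nonneg _)]
    _ ≤ ∫⁻ s, ‖inner 𝕜 V (W s)‖ₑ ∂μ := enorm_integral_le_lintegral_enorm _
    _ = ∫⁻ s, ‖∫ t, inner 𝕜 (W s) (W t) ∂μ‖ₑ ∂μ := by
        congr 1 with s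
        rw [integral_inner hW, ← ofReal_norm, ← ofReal_norm, norm_inner_symm]
    _ ≤ ∫⁻ s, ∫⁻ t, ‖inner 𝕜 (W s) (W t)‖ₑ ∂μ ∂μ :=
        lintegral_mono fun s => enorm_integral_le_lintegral_enorm _

end HilbertSpace

section TTStar

variable {a : ℝ → ℝ} {S : Set ℝ} {l : ℝ}

lemma setLIntegral_setLIntegral_rpow_mul_le (hl : 0 < l) (hl1 : l < 1) (hS : MeasurableSet S)
    (ha : Measurable a) (ha0 : ∀ t, 0 ≤ a t) (ha_top : ∫⁻ t in S, ENNReal.ofReal (a t) ≠ ⊤) :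
    ∫⁻ s in S, ∫⁻ t in S, ENNReal.ofReal ((a s * a t) ^ (1 - l / 2) * |s - t| ^ (-l)) ≤
      2 * (ENNReal.ofReal (2 / (1 - l) + 2 ^ (l / 2)) *
        (∫⁻ t in S, ENNReal.ofReal (a t)) ^ (2 - l)) := by
  set φ : ℝ → ℝ≥0∞ := S.indicator fun t => ENNReal.ofReal (a t ^ (1 - l / 2)) with hφ_def
  have hφ : Measurable φ := (ha.pow_const _).ennreal_ofReal.indicator hS
  have hφ_top (t : ℝ) : φ t ≠ ⊤ := by
    by_cases ht : t ∈ S <;> simp [hφ_def, ht]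
  have h2 : 0 < 2 - l := by linarith
  have hφ_rpow (t : ℝ) : φ t ^ (2 / (2 - l)) = S.indicator (fun t => ENNReal.ofReal (a t)) t := by
    by_cases ht : t ∈ S
    · rw [hφ_def, Set.indicator_of_mem ht, Set.indicator_of_mem ht,
        ENNReal.ofReal_rpow_of_nonneg (Real.rpow_nonneg (ha0 t) _) (by positivity),
        ← Real.rpow_mul (ha0 t), show (1 - l / 2) * (2 / (2 - l)) = 1 by field_simp, Real.rpow_one]
    · rw [hφ_def, Set.indicator_of_notMem ht, Set.indicator_of_notMem ht,
        ENNReal.zero_rpow_of_pos (by positivity)]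
  have hφ_lintegral : ∫⁻ t, φ t ^ (2 / (2 - l)) = ∫⁻ t in S, ENNReal.ofReal (a t) := by
    rw [lintegral_congr hφ_rpow, lintegral_indicator hS]
  rw [← hφ_lintegral]
  refine le_trans ?_
    (lintegral_lintegral_mul_rpow_abs_sub_le hl hl1 hφ hφ_top (hφ_lintegral ▸ ha_top))
  calc ∫⁻ s in S, ∫⁻ t in S, ENNReal.ofReal ((a s * a t) ^ (1 - l / 2) * |s - t| ^ (-l))
      = ∫⁻ s in S, ∫⁻ t in S, φ s * φ t * ENNReal.ofReal (|s - t| ^ (-l)) := by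
        refine setLIntegral_congr_fun hS fun s hs => setLIntegral_congr_fun hS fun t ht => ?_
        have hs0 : 0 ≤ a s ^ (1 - l / 2) := Real.rpow_nonneg (ha0 s) _
        have ht0 : 0 ≤ a t ^ (1 - l / 2) := Real.rpow_nonneg (ha0 t) _
        simp only [hφ_def, Set.indicator_of_mem hs, Set.indicator_of_mem ht]
        rw [Real.mul_rpow (ha0 s) (ha0 t), ENNReal.ofReal_mul (mul_nonneg hs0 ht0),
          ENNReal.ofReal_mul hs0]
    _ ≤ ∫⁻ s, ∫⁻ t, φ s * φ t * ENNReal.ofReal (|s - t| ^ (-l)) :=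
        (setLIntegral_le_lintegral _ _).trans
          (lintegral_mono fun s => setLIntegral_le_lintegral _ _)

lemma le_rpow_inv_of_sq_le_mul_rpow_two_sub {A B : ℝ} (hl : 0 < l) (hA : 0 ≤ A) (hB : 0 ≤ B)
    (h : A ^ 2 ≤ B * A ^ (2 - l)) : A ≤ B ^ l⁻¹ := by
  rcases hA.eq_or_lt with rfl | hA_pos
  · positivity
  rw [Real.le_rpow_inv_iff_of_pos hA hB hl]
  refine le_of_mul_le_mul_right (le_of_eq_of_le ?_ h) (Real.rpow_pos_of_pos hA_pos (2 - l))
  rw [← Real.rpow_add hA_pos, ← Real.rpow_two, add_sub_cancel]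

variable {𝕜 H : Type*} [RCLike 𝕜] [NormedAddCommGroup H] [InnerProductSpace 𝕜 H] [CompleteSpace H]
  [NormedSpace ℝ H] {W : ℝ → H} {c : ℝ}

lemma enorm_setIntegral_sq_le_of_inner_decay (hl : 0 < l) (hl1 : l < 1) (hc : 0 ≤ c)
    (hS : MeasurableSet S) (hW : IntegrableOn W S) (ha : Measurable a) (ha0 : ∀ t, 0 ≤ a t)
    (ha_top : ∫⁻ t in S, ENNReal.ofReal (a t) ≠ ⊤)
    (h_decay : ∀ s ∈ S, ∀ t ∈ S, s ≠ t →
      ‖inner 𝕜 (W s) (W t)‖ ≤ c * ((a s * a t) ^ (1 - l / 2) * |s - t| ^ (-l))) :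
    ‖∫ t in S, W t‖ₑ ^ 2 ≤ ENNReal.ofReal c * (2 * (ENNReal.ofReal (2 / (1 - l) + 2 ^ (l / 2)) *
      (∫⁻ t in S, ENNReal.ofReal (a t)) ^ (2 - l))) := by
  refine (enorm_integral_sq_le_lintegral_enorm_inner (𝕜 := 𝕜) hW).trans ?_
  calc ∫⁻ s in S, ∫⁻ t in S, ‖inner 𝕜 (W s) (W t)‖ₑ
      ≤ ∫⁻ s in S, ∫⁻ t in S, ENNReal.ofReal c *
          ENNReal.ofReal ((a s * a t) ^ (1 - l / 2) * |s - t| ^ (-l)) := by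
        refine setLIntegral_mono' hS fun s hs => lintegral_mono_ae ?_
        filter_upwards [ae_restrict_mem hS, ae_restrict_of_ae (Measure.ae_ne volume s)]
          with t ht hts
        rw [← ENNReal.ofReal_mul hc, ← ofReal_norm]
        exact ENNReal.ofReal_le_ofReal (h_decay s hs t ht hts.symm)
    _ = ENNReal.ofReal c * ∫⁻ s in S, ∫⁻ t in S,
          ENNReal.ofReal ((a s * a t) ^ (1 - l / 2) * |s - t| ^ (-l)) := by
        simp_rw [lintegral_const_mul' _ _ ENNReal.ofReal_ne_top]
    _ ≤ _ := by
        gcongr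
        exact setLIntegral_setLIntegral_rpow_mul_le hl hl1 hS ha ha0 ha_top

/-- The `TT*` argument: pairing `∫ W` with `f` bounds `∫ a` by `‖f‖ * ‖∫ W‖`, and the decay of the
Gram kernel of `W` bounds `‖∫ W‖ ^ 2` by a power of `∫ a` below the second. -/
lemma setLIntegral_le_of_inner_eq_of_inner_decay (hl : 0 < l) (hl1 : l < 1) (hc : 0 ≤ c)
    (hS : MeasurableSet S) (hW : IntegrableOn W S) (ha : Measurable a) (ha0 : ∀ t, 0 ≤ a t) {f : H}
    (h_inner : ∀ t ∈ S, inner 𝕜 f (W t) = (a t : 𝕜))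
    (h_decay : ∀ s ∈ S, ∀ t ∈ S, s ≠ t →
      ‖inner 𝕜 (W s) (W t)‖ ≤ c * ((a s * a t) ^ (1 - l / 2) * |s - t| ^ (-l))) :
    ∫⁻ t in S, ENNReal.ofReal (a t) ≤
      ENNReal.ofReal ((2 * c * (2 / (1 - l) + 2 ^ (l / 2)) * ‖f‖ ^ 2) ^ l⁻¹) := by
  set K : ℝ := 2 / (1 - l) + 2 ^ (l / 2)
  set V := ∫ t in S, W t
  set A : ℝ := ∫ t in S, a t
  have hK : 0 < K := by positivity
  have hA0 : 0 ≤ A := integral_nonneg ha0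
  have ha_int : IntegrableOn a S := by
    refine (hW.const_inner (𝕜 := 𝕜) f).re.congr ?_
    filter_upwards [ae_restrict_mem hS] with t ht
    rw [h_inner t ht, RCLike.ofReal_re]
  have hA_lintegral : ∫⁻ t in S, ENNReal.ofReal (a t) = ENNReal.ofReal A :=
    (ofReal_integral_eq_lintegral_ofReal ha_int (.of_forall ha0)).symm
  have h_pairing : A ≤ ‖f‖ * ‖V‖ := by
    have h : inner 𝕜 f V = (A : 𝕜) := by
      rw [← integral_inner hW, setIntegral_congr_fun hS h_inner, integral_ofReal]
    simpa only [h, RCLike.norm_ofReal, abs_of_nonneg hA0] using norm_inner_le_norm (𝕜 := 𝕜) f V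
  have h_norm_V : ‖V‖ ^ 2 ≤ 2 * c * K * A ^ (2 - l) := by
    have h := enorm_setIntegral_sq_le_of_inner_decay hl hl1 hc hS hW ha ha0
      (hA_lintegral ▸ ENNReal.ofReal_ne_top) h_decay
    rw [hA_lintegral, ENNReal.ofReal_rpow_of_nonneg hA0 (by linarith), ← ENNReal.ofReal_mul hK.le,
      ← ENNReal.ofReal_ofNat 2, ← ENNReal.ofReal_mul zero_le_two, ← ENNReal.ofReal_mul hc,
      ← ofReal_norm, ← ENNReal.ofReal_pow (norm_nonneg _),
      ENNReal.ofReal_le_ofReal_iff (by positivity)] at h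
    linarith
  rw [hA_lintegral]
  refine ENNReal.ofReal_le_ofReal
    (le_rpow_inv_of_sq_le_mul_rpow_two_sub hl hA0 (by positivity) ?_)
  calc A ^ 2 ≤ (‖f‖ * ‖V‖) ^ 2 := by gcongr
    _ = ‖f‖ ^ 2 * ‖V‖ ^ 2 := mul_pow _ _ _
    _ ≤ ‖f‖ ^ 2 * (2 * c * K * A ^ (2 - l)) := by gcongr
    _ = 2 * c * K * ‖f‖ ^ 2 * A ^ (2 - l) := by ring

end TTStar

section CompactExhaustion

open Filter Topology

variable {τ : Type*} [TopologicalSpace τ] [SigmaCompactSpace τ] {m : ℕ → τ → ℝ} {L : τ → ℝ≥0∞}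
  {α : ℝ}

/-- The compact part `Kₙ ∩ {1 / (n + 1) ≤ m n}` of the set where `m n` is positive, `Kₙ` being a
compact exhaustion of `τ`. -/
def compactPositivitySet (m : ℕ → τ → ℝ) (n : ℕ) : Set τ :=
  compactCovering τ n ∩ {t | 1 / ((n : ℝ) + 1) ≤ m n t}

lemma isCompact_compactPositivitySet {n : ℕ} (hm : Continuous (m n)) :
    IsCompact (compactPositivitySet m n) :=
  (isCompact_compactCovering τ n).inter_right (isClosed_le continuous_const hm)

lemma pos_of_mem_compactPositivitySet {n : ℕ} {t : τ} (ht : t ∈ compactPositivitySet m n) :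
    0 < m n t :=
  lt_of_lt_of_le (by positivity) ht.2

lemma rpow_le_liminf_indicator_compactPositivitySet (hα : 0 < α) {t : τ}
    (h_lim : Tendsto (fun n => ENNReal.ofReal (m n t)) atTop (𝓝 (L t))) :
    L t ^ α ≤ liminf (fun n =>
      (compactPositivitySet m n).indicator (fun t => ENNReal.ofReal (m n t ^ α)) t) atTop := by
  rcases eq_or_ne (L t) 0 with h0 | h0
  · rw [h0, ENNReal.zero_rpow_of_pos hα]
    exact zero_le
  have h_inv : Tendsto (fun n : ℕ => ENNReal.ofReal (1 / ((n : ℝ) + 1))) atTop (𝓝 0) := by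
    simpa using ENNReal.tendsto_ofReal (tendsto_one_div_add_atTop_nhds_zero_nat (𝕜 := ℝ))
  obtain ⟨N, hN⟩ := exists_mem_compactCovering t
  refine (((ENNReal.continuous_rpow_const.tendsto _).comp h_lim).congr' ?_).liminf_eq.ge
  filter_upwards [h_inv.eventually_lt h_lim (pos_iff_ne_zero.2 h0), eventually_ge_atTop N]
    with n h_lt hn
  have ht : t ∈ compactPositivitySet m n :=
    ⟨compactCovering_subset τ hn hN, (ENNReal.ofReal_lt_ofReal_iff'.1 h_lt).1.le⟩
  rw [Set.indicator_of_mem ht, Function.comp_apply]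
  exact ENNReal.ofReal_rpow_of_pos (pos_of_mem_compactPositivitySet ht)

variable [T2Space τ] [MeasurableSpace τ] [BorelSpace τ] {μ : Measure τ}

lemma lintegral_rpow_le_of_forall_isCompact {B : ℝ≥0∞} (hα : 0 < α) (hm : ∀ n, Continuous (m n))
    (h_lim : ∀ t, Tendsto (fun n => ENNReal.ofReal (m n t)) atTop (𝓝 (L t)))
    (h_le : ∀ n S, IsCompact S → (∀ t ∈ S, 0 < m n t) →
      ∫⁻ t in S, ENNReal.ofReal (m n t ^ α) ∂μ ≤ B) :
    ∫⁻ t, L t ^ α ∂μ ≤ B := by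
  have hS (n : ℕ) : IsCompact (compactPositivitySet m n) := isCompact_compactPositivitySet (hm n)
  calc ∫⁻ t, L t ^ α ∂μ
      ≤ ∫⁻ t, liminf (fun n => (compactPositivitySet m n).indicator
          (fun t => ENNReal.ofReal (m n t ^ α)) t) atTop ∂μ :=
        lintegral_mono fun t => rpow_le_liminf_indicator_compactPositivitySet hα (h_lim t)
    _ ≤ liminf (fun n => ∫⁻ t, (compactPositivitySet m n).indicator
          (fun t => ENNReal.ofReal (m n t ^ α)) t ∂μ) atTop :=
        lintegral_liminf_le fun n =>
          ((hm n).measurable.pow_const α).ennreal_ofReal.indicator (hS n).measurableSet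
    _ ≤ B := by
        refine (liminf_le_liminf (.of_forall fun n => ?_)).trans_eq (liminf_const B)
        rw [lintegral_indicator (hS n).measurableSet]
        exact h_le n _ (hS n) fun t => pos_of_mem_compactPositivitySet

end CompactExhaustion

section DispersiveGroup

variable {X : Type*} [MeasurableSpace X] {μ : Measure X}

/-- `U` is a weakly continuous one-parameter group of isometries of `L²(μ)` which satisfies the
dispersive estimate `‖U t‖_{L¹ → L^∞} ≤ C |t|^(-σ)`. The estimate is stated in its dual form, as a
bound on matrix coefficients, so that only elements of `L²(μ)` enter. -/
structure IsDispersiveGroup (U : ℝ → Lp ℂ 2 μ →ₗᵢ[ℂ] Lp ℂ 2 μ) (C σ : ℝ) : Prop where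
  const_pos : 0 < C
  apply_add (s t : ℝ) (f : Lp ℂ 2 μ) : U (s + t) f = U s (U t f)
  continuous_inner_apply (f g : Lp ℂ 2 μ) : Continuous fun t => inner ℂ g (U t f)
  norm_inner_apply_le {t : ℝ} (ht : t ≠ 0) {f g : Lp ℂ 2 μ} (hf : Integrable f μ)
    (hg : Integrable g μ) :
    ‖inner ℂ g (U t f)‖ ≤ C * |t| ^ (-σ) * ((∫ x, ‖f x‖ ∂μ) * ∫ x, ‖g x‖ ∂μ)

namespace IsDispersiveGroup

variable {U : ℝ → Lp ℂ 2 μ →ₗᵢ[ℂ] Lp ℂ 2 μ} {C σ : ℝ}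

lemma apply_zero (hU : IsDispersiveGroup U C σ) (f : Lp ℂ 2 μ) : U 0 f = f := by
  apply (U 0).injective
  rw [← hU.apply_add, add_zero]

lemma inner_apply_apply (hU : IsDispersiveGroup U C σ) (s t : ℝ) (f g : Lp ℂ 2 μ) :
    inner ℂ (U s g) (U t f) = inner ℂ g (U (t - s) f) := by
  rw [← (U s).inner_map_map g, ← hU.apply_add, add_sub_cancel]

lemma continuous_apply (hU : IsDispersiveGroup U C σ) (f : Lp ℂ 2 μ) : Continuous fun t => U t f :=
  continuous_of_norm_eq_of_continuous_inner (𝕜 := ℂ) (fun t => (U t).norm_map f)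
    (hU.continuous_inner_apply f)

lemma continuous_apply_apply (hU : IsDispersiveGroup U C σ) {τ : Type*} [TopologicalSpace τ]
    {a : τ → ℝ} {F : τ → Lp ℂ 2 μ} (ha : Continuous a) (hF : Continuous F) :
    Continuous fun x => U (a x) (F x) :=
  (continuous_prod_of_continuous_lipschitzWith' (fun p : ℝ × Lp ℂ 2 μ => U p.1 p.2) 1
    (fun t => (U t).lipschitz) hU.continuous_apply).comp (ha.prodMk hF)

lemma norm_inner_apply_le_interpolate (hU : IsDispersiveGroup U C σ) {r : ℝ} (hr : 2 < r) {t : ℝ}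
    (ht : t ≠ 0) {F G : Lp ℂ 2 μ} (hF : Integrable (fun x => ‖F x‖ ^ (r / (r - 1))) μ)
    (hG : Integrable (fun x => ‖G x‖ ^ (r / (r - 1))) μ) :
    ‖inner ℂ G (U t F)‖ ≤ C ^ (1 - 2 / r) * |t| ^ (-(σ * (1 - 2 / r))) *
      ((∫ x, ‖F x‖ ^ (r / (r - 1)) ∂μ) * ∫ x, ‖G x‖ ^ (r / (r - 1)) ∂μ) ^ (1 - 1 / r) := by
  have hr1 : 0 < r - 1 := by linarith
  have h := norm_inner_le_interpolate (T := (U t).toContinuousLinearMap)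
    (U t).norm_toContinuousLinearMap_le
    (mul_nonneg hU.const_pos.le (Real.rpow_nonneg (abs_nonneg t) (-σ)))
    (fun F G hF hG => hU.norm_inner_apply_le ht hF hG)
    (by rw [le_div_iff₀ hr1]; linarith) (by rw [div_le_iff₀ hr1]; linarith) hF hG
  have h_root : 1 / (r / (r - 1)) = 1 - 1 / r := by
    field_simp
  have h_theta : 2 / (r / (r - 1)) - 1 = 1 - 2 / r := by
    field_simp
    ring
  rwa [Real.one_rpow, one_mul, h_root, h_theta, Real.mul_rpow hU.const_pos.le (by positivity),
    ← Real.rpow_mul (abs_nonneg t), neg_mul] at h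

variable {n q r : ℝ}

/-- The path `t ↦ U (-t) G` for the truncated dual function `G` of `U t f`, weighted by a power of
the truncated moment so that pairing it with `f` gives the integrand of the mixed norm. -/
def dualPath (U : ℝ → Lp ℂ 2 μ →ₗᵢ[ℂ] Lp ℂ 2 μ) (hn : 0 ≤ n) (hr : 2 < r) (q : ℝ) (f : Lp ℂ 2 μ)
    (t : ℝ) : Lp ℂ 2 μ :=
  ((truncMoment n r (U t f) ^ (q / r - 1) : ℝ) : ℂ) • U (-t) (truncDualityLp hn hr (U t f))

lemma inner_dualPath (hU : IsDispersiveGroup U C σ) (hn : 0 ≤ n) (hr : 2 < r) {f : Lp ℂ 2 μ} {t : ℝ}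
    (ht : 0 < truncMoment n r (U t f)) :
    inner ℂ f (dualPath U hn hr q f t) = ((truncMoment n r (U t f) ^ (q / r) : ℝ) : ℂ) := by
  have h := hU.inner_apply_apply (-t) 0 f (truncDualityLp hn hr (U t f))
  rw [hU.apply_zero, sub_neg_eq_add, zero_add, inner_truncDualityLp_self] at h
  rw [dualPath, inner_smul_right, ← inner_conj_symm, h, Complex.conj_ofReal, ← Complex.ofReal_mul,
    ← Real.rpow_add_one ht.ne', sub_add_cancel]

lemma continuous_truncMoment_apply (hU : IsDispersiveGroup U C σ) (hn : 0 ≤ n) (hr : 2 < r)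
    (f : Lp ℂ 2 μ) : Continuous fun t => truncMoment n r (U t f) :=
  (continuous_truncMoment hn hr).comp (hU.continuous_apply f)

lemma integrableOn_dualPath (hU : IsDispersiveGroup U C σ) (hn : 0 ≤ n) (hr : 2 < r) {f : Lp ℂ 2 μ}
    {S : Set ℝ} (hS : IsCompact S) (hS_pos : ∀ t ∈ S, 0 < truncMoment n r (U t f)) :
    IntegrableOn (dualPath U hn hr q f) S := by
  have h_weight : ContinuousOn (fun t => truncMoment n r (U t f) ^ (q / r - 1)) S :=
    (hU.continuous_truncMoment_apply hn hr f).continuousOn.rpow_const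
      fun t ht => Or.inl (hS_pos t ht).ne'
  have h_path : Continuous fun t => U (-t) (truncDualityLp hn hr (U t f)) :=
    hU.continuous_apply_apply continuous_neg
      ((continuous_truncDualityLp hn hr).comp (hU.continuous_apply f))
  exact ((Complex.continuous_ofReal.comp_continuousOn h_weight).smul
    h_path.continuousOn).integrableOn_compact hS

lemma norm_inner_truncDualityLp_le (hU : IsDispersiveGroup U C σ) (hn : 0 ≤ n) (hr : 2 < r) {t : ℝ}
    (ht : t ≠ 0) (f g : Lp ℂ 2 μ) :
    ‖inner ℂ (truncDualityLp hn hr g) (U t (truncDualityLp hn hr f))‖ ≤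
      C ^ (1 - 2 / r) * |t| ^ (-(σ * (1 - 2 / r))) *
        (truncMoment n r f * truncMoment n r g) ^ (1 - 1 / r) := by
  have hr_inv : 0 ≤ 1 - 1 / r := by
    rw [sub_nonneg, div_le_one (by linarith)]
    linarith
  have := hU.const_pos.le
  have := truncMoment_nonneg (r := r) hn f
  refine (hU.norm_inner_apply_le_interpolate hr ht (integrable_norm_truncDualityLp_rpow hn hr f)
    (integrable_norm_truncDualityLp_rpow hn hr g)).trans ?_
  gcongr
  · exact integral_norm_truncDualityLp_rpow_le hn hr f
  · exact integral_norm_truncDualityLp_rpow_le hn hr g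

lemma norm_inner_dualPath_le (hU : IsDispersiveGroup U C σ) (hn : 0 ≤ n) (hr : 2 < r) (hq : q ≠ 0)
    {f : Lp ℂ 2 μ} {s t : ℝ} (hst : s ≠ t) (hs : 0 < truncMoment n r (U s f))
    (ht : 0 < truncMoment n r (U t f)) :
    ‖inner ℂ (dualPath U hn hr q f s) (dualPath U hn hr q f t)‖ ≤ C ^ (1 - 2 / r) *
      ((truncMoment n r (U s f) ^ (q / r) * truncMoment n r (U t f) ^ (q / r)) ^ (1 - q⁻¹) *
        |s - t| ^ (-(σ * (1 - 2 / r)))) := by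
  have h_decay := hU.norm_inner_truncDualityLp_le hn hr (sub_ne_zero.2 hst) (U t f) (U s f)
  rw [dualPath, dualPath, inner_smul_left, inner_smul_right, hU.inner_apply_apply,
    neg_sub_neg, Complex.conj_ofReal, norm_mul, norm_mul, Complex.norm_real, Complex.norm_real,
    Real.norm_of_nonneg (by positivity), Real.norm_of_nonneg (by positivity)]
  set a := truncMoment n r (U s f)
  set b := truncMoment n r (U t f)
  have h_weight {m : ℝ} (hm : 0 < m) :
      m ^ (q / r - 1) * m ^ (1 - 1 / r) = (m ^ (q / r)) ^ (1 - q⁻¹) := by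
    rw [← Real.rpow_add hm, ← Real.rpow_mul hm.le]
    congr 1
    field_simp
    ring
  calc a ^ (q / r - 1) * (b ^ (q / r - 1) * ‖inner ℂ (truncDualityLp hn hr (U s f))
        (U (s - t) (truncDualityLp hn hr (U t f)))‖)
      ≤ a ^ (q / r - 1) * (b ^ (q / r - 1) *
          (C ^ (1 - 2 / r) * |s - t| ^ (-(σ * (1 - 2 / r))) * (b * a) ^ (1 - 1 / r))) := by
        gcongr
    _ = C ^ (1 - 2 / r) * ((a ^ (q / r - 1) * a ^ (1 - 1 / r)) *
          (b ^ (q / r - 1) * b ^ (1 - 1 / r)) * |s - t| ^ (-(σ * (1 - 2 / r)))) := by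
        rw [Real.mul_rpow ht.le hs.le]
        ring
    _ = C ^ (1 - 2 / r) * ((a ^ (q / r) * b ^ (q / r)) ^ (1 - q⁻¹) *
          |s - t| ^ (-(σ * (1 - 2 / r)))) := by
        rw [h_weight hs, h_weight ht, ← Real.mul_rpow (by positivity) (by positivity)]

lemma setLIntegral_truncMoment_rpow_le (hU : IsDispersiveGroup U C σ) (hn : 0 ≤ n) (hq : 2 < q)
    (hr : 2 < r) (hqr : 2 / q = σ * (1 - 2 / r)) {f : Lp ℂ 2 μ} {S : Set ℝ} (hS : IsCompact S)
    (hS_pos : ∀ t ∈ S, 0 < truncMoment n r (U t f)) :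
    ∫⁻ t in S, ENNReal.ofReal (truncMoment n r (U t f) ^ (q / r)) ≤
      ENNReal.ofReal ((2 * C ^ (1 - 2 / r) * (2 / (1 - 2 / q) + 2 ^ (2 / q / 2)) * ‖f‖ ^ 2) ^
        (2 / q)⁻¹) := by
  refine setLIntegral_le_of_inner_eq_of_inner_decay (𝕜 := ℂ) (by positivity)
    (by rw [div_lt_one (by linarith)]; exact hq) (Real.rpow_nonneg hU.const_pos.le _)
    hS.measurableSet (hU.integrableOn_dualPath hn hr hS hS_pos)
    ((hU.continuous_truncMoment_apply hn hr f).measurable.pow_const _)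
    (fun t => Real.rpow_nonneg (truncMoment_nonneg hn _) _)
    (fun t ht => hU.inner_dualPath hn hr (hS_pos t ht)) fun s hs t ht hst => ?_
  have h := hU.norm_inner_dualPath_le hn hr (by linarith : q ≠ 0) hst (hS_pos s hs) (hS_pos t ht)
  have h_half : 2 / q / 2 = q⁻¹ := by
    field_simp
  rwa [h_half, hqr]

theorem lintegral_lintegral_enorm_rpow_le (hU : IsDispersiveGroup U C σ) (hq : 2 < q) (hr : 2 < r)
    (hqr : 2 / q = σ * (1 - 2 / r)) (f : Lp ℂ 2 μ) :
    ∫⁻ t, (∫⁻ x, ‖U t f x‖ₑ ^ r ∂μ) ^ (q / r) ≤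
      ENNReal.ofReal ((2 * C ^ (1 - 2 / r) * (2 / (1 - 2 / q) + 2 ^ (2 / q / 2)) * ‖f‖ ^ 2) ^
        (2 / q)⁻¹) :=
  lintegral_rpow_le_of_forall_isCompact (by positivity)
    (fun n : ℕ => hU.continuous_truncMoment_apply n.cast_nonneg hr f)
    (fun t => tendsto_ofReal_truncMoment hr (U t f))
    fun n _ hS hS_pos => hU.setLIntegral_truncMoment_rpow_le n.cast_nonneg hq hr hqr hS hS_pos

end IsDispersiveGroup

end DispersiveGroup

section FourierTransform

variable {E : Type*} [NormedAddCommGroup E] [InnerProductSpace ℝ E] [FiniteDimensional ℝ E]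
  [MeasurableSpace E] [BorelSpace E]

lemma integral_fourier_mul_eq_integral_mul_fourier {f g : E → ℂ} (hf : Integrable f)
    (hg : Integrable g) : ∫ ξ, 𝓕 f ξ * g ξ = ∫ x, f x * 𝓕 g x := by
  simpa using! VectorFourier.integral_fourierIntegral_smul_eq_flip (L := innerₗ E)
    (μ := volume) (ν := volume) Real.continuous_fourierChar continuous_inner hf hg

lemma continuous_fourier {f : E → ℂ} (hf : Integrable f) : Continuous (𝓕 f) :=
  VectorFourier.fourierIntegral_continuous Real.continuous_fourierChar
    (L := innerₗ E) continuous_inner hf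

lemma norm_fourier_le_integral_norm (f : E → ℂ) (ξ : E) : ‖𝓕 f ξ‖ ≤ ∫ x, ‖f x‖ :=
  VectorFourier.norm_fourierIntegral_le_integral_norm _ _ _ _ _

lemma conj_fourier (g : E → ℂ) (ξ : E) :
    starRingEnd ℂ (𝓕 g ξ) = 𝓕 (fun x => starRingEnd ℂ (g x)) (-ξ) := by
  rw [Real.fourier_eq', Real.fourier_eq', ← integral_conj]
  congr 1 with x
  simp [← Complex.exp_conj, Complex.conj_ofNat]

lemma ae_eq_of_forall_integral_schwartz_mul_eq {f g : E → ℂ} (hf : LocallyIntegrable f)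
    (hg : LocallyIntegrable g) (h : ∀ φ : 𝓢(E, ℂ), ∫ x, φ x * f x = ∫ x, φ x * g x) :
    f =ᵐ[volume] g := by
  refine ae_eq_of_integral_contDiff_smul_eq hf hg fun η hη_smooth hη_cpt => ?_
  have hη_cpt' : HasCompactSupport (Complex.ofRealCLM ∘ η) := hη_cpt.comp_left rfl
  have hη_smooth' : ContDiff ℝ (⊤ : ℕ∞) (Complex.ofRealCLM ∘ η) := by fun_prop
  simpa only [Complex.real_smul] using! h (hη_cpt'.toSchwartzMap hη_smooth')

lemma coeFn_fourier_ae_eq_of_integrable (F : L²[E]) (hF : Integrable F) :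
    ((𝓕 F : L²[E]) : E → ℂ) =ᵐ[volume] 𝓕 (F : E → ℂ) := by
  refine ae_eq_of_forall_integral_schwartz_mul_eq
    ((Lp.memLp _).locallyIntegrable one_le_two) (continuous_fourier hF).locallyIntegrable
    fun φ => ?_
  have h := congrArg (· φ) (Lp.fourier_toTemperedDistribution_eq F)
  simp only [TemperedDistribution.fourier_apply, Lp.toTemperedDistribution_apply,
    smul_eq_mul] at h
  rw [← h, SchwartzMap.fourier_coe,
    integral_fourier_mul_eq_integral_mul_fourier φ.integrable hF]

end FourierTransform

section FourierSymbol

variable {E : Type*} [NormedAddCommGroup E]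

/-- The Fourier symbol of the free Schrödinger propagator `e^{itΔ}`. -/
def schrodingerSymbol (t : ℝ) (ξ : E) : ℂ :=
  cexp (((-(4 * Real.pi ^ 2 * t * ‖ξ‖ ^ 2) : ℝ) : ℂ) * I)

lemma norm_schrodingerSymbol (t : ℝ) (ξ : E) : ‖schrodingerSymbol t ξ‖ = 1 :=
  Complex.norm_exp_ofReal_mul_I _

lemma schrodingerSymbol_add (s t : ℝ) (ξ : E) :
    schrodingerSymbol (s + t) ξ = schrodingerSymbol s ξ * schrodingerSymbol t ξ := by
  rw [schrodingerSymbol, schrodingerSymbol, schrodingerSymbol, ← Complex.exp_add]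
  congr 1
  push_cast
  ring

lemma continuous_schrodingerSymbol (t : ℝ) : Continuous (schrodingerSymbol (E := E) t) := by
  unfold schrodingerSymbol
  fun_prop

lemma hasTemperateGrowth_cexp_mul_I :
    Function.HasTemperateGrowth fun x : ℝ => cexp (x * I) := by
  have h_deriv (n : ℕ) : iteratedDeriv n (fun x : ℝ => cexp (x * I)) =
      fun x : ℝ => I ^ n * cexp (x * I) := by
    induction n with
    | zero => simp
    | succ n ih =>
      ext x
      rw [iteratedDeriv_succ, ih]
      have h := (((hasDerivAt_id x).ofReal_comp.mul_const I).cexp).const_mul (I ^ n)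
      refine (h.deriv).trans ?_
      simp only [id, Complex.ofReal_one]
      ring
  refine ⟨(Complex.ofRealCLM.contDiff.mul contDiff_const).cexp, fun n => ⟨0, 1, fun x => ?_⟩⟩
  rw [norm_iteratedFDeriv_eq_norm_iteratedDeriv, h_deriv, norm_mul, norm_pow, Complex.norm_I,
    Complex.norm_exp_ofReal_mul_I]
  simp

lemma hasTemperateGrowth_schrodingerSymbol [InnerProductSpace ℝ E] (t : ℝ) :
    Function.HasTemperateGrowth (schrodingerSymbol (E := E) t) := by
  have h_phase : Function.HasTemperateGrowth fun ξ : E => -(4 * Real.pi ^ 2 * t * ‖ξ‖ ^ 2) := by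
    fun_prop
  exact hasTemperateGrowth_cexp_mul_I.comp h_phase

end FourierSymbol

section FreePropagator

variable {E : Type*} [NormedAddCommGroup E] [InnerProductSpace ℝ E] [FiniteDimensional ℝ E]
  [MeasurableSpace E] [BorelSpace E]

lemma memLp_schrodingerSymbol_mul (t : ℝ) (F : L²[E]) :
    MemLp (fun ξ => schrodingerSymbol t ξ * F ξ) 2 volume :=
  (Lp.memLp F).of_le
    ((continuous_schrodingerSymbol t).aestronglyMeasurable.mul (Lp.aestronglyMeasurable F))
    (.of_forall fun ξ => by simp [norm_schrodingerSymbol])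

/-- Multiplication by the symbol of `e^{itΔ}`, as an operator on `L²`. -/
def schrodingerMul (t : ℝ) (F : L²[E]) : L²[E] := (memLp_schrodingerSymbol_mul t F).toLp _

lemma coeFn_schrodingerMul (t : ℝ) (F : L²[E]) :
    (schrodingerMul t F : E → ℂ) =ᵐ[volume] fun ξ => schrodingerSymbol t ξ * F ξ :=
  MemLp.coeFn_toLp _

lemma isometry_schrodingerMul (t : ℝ) : Isometry (schrodingerMul (E := E) t) := by
  refine Isometry.of_dist_eq fun F G => ?_
  rw [Lp.dist_def, Lp.dist_def]
  congr 1
  refine eLpNorm_congr_norm_ae ?_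
  filter_upwards [coeFn_schrodingerMul t F, coeFn_schrodingerMul t G] with ξ hF hG
  simp [hF, hG, ← mul_sub, norm_schrodingerSymbol]

/-- `U t` is the propagator `e^{itΔ}` of the free Schrödinger equation on `E`. Prescribing the
isometries `U t` by Fourier inversion on Schwartz functions determines them on all of `L²`. -/
def IsSchrodingerPropagator (U : ℝ → L²[E] →ₗᵢ[ℂ] L²[E]) : Prop :=
  ∀ (t : ℝ) (f : 𝓢(E, ℂ)) (g : L²[E]), (g : E → ℂ) =ᵐ[volume] ⇑f →
    (U t g : E → ℂ) =ᵐ[volume] fun x : E =>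
      ∫ ξ : E, Complex.exp (Complex.I *
        ((2 * Real.pi * ⟪x, ξ⟫ - 4 * Real.pi ^ 2 * t * ‖ξ‖ ^ 2 : ℝ) : ℂ)) * 𝓕 (⇑f) ξ

namespace IsSchrodingerPropagator

variable {U : ℝ → L²[E] →ₗᵢ[ℂ] L²[E]}

lemma apply_toLp (hU : IsSchrodingerPropagator U) (t : ℝ) (f : 𝓢(E, ℂ)) :
    U t (f.toLp 2) = (fourierMultiplierCLM ℂ (schrodingerSymbol t) f).toLp 2 := by
  refine Lp.ext ((hU t f _ (f.coeFn_toLp 2 volume)).trans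
    (.trans (.of_eq (funext fun x => ?_)) (coeFn_toLp _ 2 volume).symm))
  rw [fourierMultiplierCLM_apply, SchwartzMap.fourierInv_coe, Real.fourierInv_eq']
  congr 1 with ξ
  rw [smulLeftCLM_apply_apply (hasTemperateGrowth_schrodingerSymbol t), SchwartzMap.fourier_coe,
    schrodingerSymbol, smul_eq_mul, smul_eq_mul, ← mul_assoc, ← Complex.exp_add,
    real_inner_comm]
  congr 2
  push_cast
  ring

lemma fourier_apply (hU : IsSchrodingerPropagator U) (t : ℝ) (f : L²[E]) :
    𝓕 (U t f) = schrodingerMul t (𝓕 f) := by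
  refine DenseRange.induction_on (denseRange_toLpCLM (p := 2) ENNReal.ofNat_ne_top) f
    (isClosed_eq
      ((Lp.fourierTransformₗᵢ E ℂ).continuous.comp (U t).continuous)
      ((isometry_schrodingerMul t).continuous.comp (Lp.fourierTransformₗᵢ E ℂ).continuous))
    fun φ => Lp.ext ?_
  change (𝓕 (U t (φ.toLp 2)) : L²[E]) =ᵐ[volume] (schrodingerMul t (𝓕 (φ.toLp 2)) : E → ℂ)
  rw [hU.apply_toLp, toLp_fourier_eq, toLp_fourier_eq, fourierMultiplierCLM_apply,
    fourier_fourierInv_eq]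
  filter_upwards [coeFn_schrodingerMul t ((𝓕 φ).toLp 2), (𝓕 φ).coeFn_toLp 2 volume,
    (smulLeftCLM ℂ (schrodingerSymbol t) (𝓕 φ)).coeFn_toLp 2 volume] with ξ h_mul hφ h_smul
  rw [h_mul, hφ, h_smul, smulLeftCLM_apply_apply (hasTemperateGrowth_schrodingerSymbol t),
    smul_eq_mul]

lemma apply_add (hU : IsSchrodingerPropagator U) (s t : ℝ) (f : L²[E]) :
    U (s + t) f = U s (U t f) := by
  apply (Lp.fourierTransformₗᵢ E ℂ).injective
  change (𝓕 (U (s + t) f) : L²[E]) = 𝓕 (U s (U t f))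
  rw [hU.fourier_apply, hU.fourier_apply, hU.fourier_apply]
  apply Lp.ext
  filter_upwards [coeFn_schrodingerMul s (schrodingerMul t (𝓕 f)), coeFn_schrodingerMul t (𝓕 f),
    coeFn_schrodingerMul (s + t) (𝓕 f)] with ξ hs ht hst
  rw [hs, ht, hst, schrodingerSymbol_add, mul_assoc]

lemma inner_apply (hU : IsSchrodingerPropagator U) (t : ℝ) (f g : L²[E]) :
    inner ℂ g (U t f) =
      ∫ ξ, schrodingerSymbol t ξ * inner ℂ ((𝓕 g : L²[E]) ξ) ((𝓕 f : L²[E]) ξ) := by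
  rw [← Lp.inner_fourier_eq, hU.fourier_apply, L2.inner_def]
  refine integral_congr_ae ?_
  filter_upwards [coeFn_schrodingerMul t (𝓕 f)] with ξ h
  rw [h, ← smul_eq_mul, inner_smul_right]

lemma continuous_inner_apply (hU : IsSchrodingerPropagator U) (f g : L²[E]) :
    Continuous fun t => inner ℂ g (U t f) := by
  simp_rw [hU.inner_apply]
  have h_int := L2.integrable_inner (𝕜 := ℂ) (𝓕 g : L²[E]) (𝓕 f)
  refine continuous_of_dominated
    (fun t => (continuous_schrodingerSymbol t).aestronglyMeasurable.mul h_int.1)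
    (fun t => .of_forall fun ξ => ?_) h_int.norm (.of_forall fun ξ => ?_)
  · rw [norm_mul, norm_schrodingerSymbol, one_mul]
  · unfold schrodingerSymbol
    fun_prop

end IsSchrodingerPropagator

end FreePropagator

section Dispersive

variable {E : Type*} [NormedAddCommGroup E] [InnerProductSpace ℝ E] [FiniteDimensional ℝ E]
  [MeasurableSpace E] [BorelSpace E]

open Module (finrank)

lemma norm_fourier_gaussian_le {b : ℂ} (hb : 0 < b.re) (x w : E) :
    ‖𝓕 (fun v : E => cexp (-b * ‖v‖ ^ 2 + 2 * Real.pi * I * ⟪x, v⟫)) w‖ ≤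
      (Real.pi / ‖b‖) ^ ((finrank ℝ E : ℝ) / 2) := by
  have h_exponent : ((finrank ℝ E : ℂ) / 2) = (((finrank ℝ E : ℝ) / 2 : ℝ) : ℂ) := by
    push_cast
    rfl
  have h_re : (-(Real.pi : ℂ) ^ 2 * (‖x - w‖ : ℂ) ^ 2 / b).re ≤ 0 := by
    have h : -(Real.pi : ℂ) ^ 2 * (‖x - w‖ : ℂ) ^ 2 / b =
        ((-(Real.pi ^ 2 * ‖x - w‖ ^ 2) : ℝ) : ℂ) * b⁻¹ := by
      push_cast
      ring
    rw [h, Complex.re_ofReal_mul, Complex.inv_re, neg_mul, neg_nonpos]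
    have := Complex.normSq_nonneg b
    positivity
  rw [fourier_gaussian_innerProductSpace' hb, h_exponent, norm_mul, Complex.norm_cpow_real,
    norm_div, Complex.norm_real, Real.norm_of_nonneg Real.pi_pos.le, Complex.norm_exp]
  exact mul_le_of_le_one_right (by positivity) (Real.exp_le_one_iff.mpr h_re)

lemma norm_fourier_gaussian_mul_conj_fourier_le {b : ℂ} (hb : 0 < b.re) {g : E → ℂ}
    (hg : Integrable g) (y : E) :
    ‖𝓕 (fun ξ => cexp (-b * ‖ξ‖ ^ 2) * starRingEnd ℂ (𝓕 g ξ)) y‖ ≤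
      (Real.pi / ‖b‖) ^ ((finrank ℝ E : ℝ) / 2) * ∫ x, ‖g x‖ := by
  have hg_conj : Integrable fun x => starRingEnd ℂ (g x) :=
    Complex.conjCLE.toContinuousLinearMap.integrable_comp hg
  have h_gauss := GaussianFourier.integrable_cexp_neg_mul_sq_norm_add hb (2 * Real.pi * I) y
  have h_exchange : 𝓕 (fun ξ => cexp (-b * ‖ξ‖ ^ 2) * starRingEnd ℂ (𝓕 g ξ)) y =
      ∫ x, starRingEnd ℂ (g x) *
        𝓕 (fun v : E => cexp (-b * ‖v‖ ^ 2 + 2 * Real.pi * I * ⟪y, v⟫)) x := by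
    rw [← integral_fourier_mul_eq_integral_mul_fourier hg_conj h_gauss, Real.fourier_eq',
      ← integral_neg_eq_self]
    congr 1 with ξ
    rw [conj_fourier, neg_neg, norm_neg, smul_eq_mul, ← mul_assoc, ← Complex.exp_add, mul_comm,
      inner_neg_left, real_inner_comm]
    congr 2
    push_cast
    ring
  rw [h_exchange, ← integral_const_mul]
  refine norm_integral_le_of_norm_le (hg.norm.const_mul _) (.of_forall fun x => ?_)
  rw [norm_mul, RCLike.norm_conj, mul_comm]
  gcongr
  exact norm_fourier_gaussian_le hb y x

lemma norm_integral_gaussian_mul_inner_fourier_le {b : ℂ} (hb : 0 < b.re) {f g : E → ℂ}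
    (hf : Integrable f) (hg : Integrable g) :
    ‖∫ ξ, cexp (-b * ‖ξ‖ ^ 2) * inner ℂ (𝓕 g ξ) (𝓕 f ξ)‖ ≤
      (Real.pi / ‖b‖) ^ ((finrank ℝ E : ℝ) / 2) * ((∫ x, ‖f x‖) * ∫ x, ‖g x‖) := by
  have h_gauss : Integrable fun v : E => cexp (-b * ‖v‖ ^ 2) := by
    simpa using GaussianFourier.integrable_cexp_neg_mul_sq_norm_add hb (2 * Real.pi * I) (0 : E)
  have h_int : Integrable fun ξ => cexp (-b * ‖ξ‖ ^ 2) * starRingEnd ℂ (𝓕 g ξ) :=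
    h_gauss.mul_bdd (Complex.continuous_conj.comp (continuous_fourier hg)).aestronglyMeasurable
      (.of_forall fun ξ => (RCLike.norm_conj _).trans_le (norm_fourier_le_integral_norm g ξ))
  calc ‖∫ ξ, cexp (-b * ‖ξ‖ ^ 2) * inner ℂ (𝓕 g ξ) (𝓕 f ξ)‖
      = ‖∫ y, f y * 𝓕 (fun ξ => cexp (-b * ‖ξ‖ ^ 2) * starRingEnd ℂ (𝓕 g ξ)) y‖ := by
        rw [← integral_fourier_mul_eq_integral_mul_fourier hf h_int]
        congr 2 with ξ
        rw [RCLike.inner_apply]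
        ring
    _ ≤ ∫ y, ‖f y‖ * ((Real.pi / ‖b‖) ^ ((finrank ℝ E : ℝ) / 2) * ∫ x, ‖g x‖) := by
        refine norm_integral_le_of_norm_le (hf.norm.mul_const _) (.of_forall fun y => ?_)
        rw [norm_mul]
        gcongr
        exact norm_fourier_gaussian_mul_conj_fourier_le hb hg y
    _ = (Real.pi / ‖b‖) ^ ((finrank ℝ E : ℝ) / 2) * ((∫ x, ‖f x‖) * ∫ x, ‖g x‖) := by
        rw [integral_mul_const]
        ring

namespace IsSchrodingerPropagator

variable {U : ℝ → L²[E] →ₗᵢ[ℂ] L²[E]}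

lemma tendsto_integral_gaussian_mul_inner_fourier (hU : IsSchrodingerPropagator U) (t : ℝ)
    (f g : L²[E]) :
    Filter.Tendsto (fun ε : ℝ => ∫ ξ, cexp (-(ε + (4 * Real.pi ^ 2 * t : ℝ) * I) * ‖ξ‖ ^ 2) *
        inner ℂ ((𝓕 g : L²[E]) ξ) ((𝓕 f : L²[E]) ξ))
      (nhdsWithin 0 (Set.Ioi 0)) (nhds (inner ℂ g (U t f))) := by
  have h_int := L2.integrable_inner (𝕜 := ℂ) (𝓕 g : L²[E]) (𝓕 f)
  rw [hU.inner_apply]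
  refine tendsto_integral_filter_of_dominated_convergence _
    (.of_forall fun ε => (Continuous.aestronglyMeasurable (by fun_prop)).mul h_int.1)
    ?_ h_int.norm (.of_forall fun ξ => Filter.Tendsto.mul_const _ ?_)
  · filter_upwards [self_mem_nhdsWithin] with ε hε
    refine .of_forall fun ξ => ?_
    have h_re : (-(ε + (4 * Real.pi ^ 2 * t : ℝ) * I) * (‖ξ‖ : ℂ) ^ 2).re = -(ε * ‖ξ‖ ^ 2) := by
      rw [← Complex.ofReal_pow, Complex.re_mul_ofReal, Complex.neg_re, Complex.add_re,
        Complex.ofReal_re, Complex.re_ofReal_mul, Complex.I_re]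
      ring
    rw [norm_mul, Complex.norm_exp, h_re]
    have : 0 ≤ ε * ‖ξ‖ ^ 2 := mul_nonneg (le_of_lt hε) (by positivity)
    exact mul_le_of_le_one_left (norm_nonneg _) (Real.exp_le_one_iff.mpr (by linarith))
  · have h_cont : Continuous fun ε : ℝ =>
        cexp (-(ε + (4 * Real.pi ^ 2 * t : ℝ) * I) * (‖ξ‖ : ℂ) ^ 2) := by fun_prop
    convert! (h_cont.tendsto 0).mono_left nhdsWithin_le_nhds using 2
    rw [schrodingerSymbol]
    congr 1
    push_cast
    ring

/-- Regularising the symbol `e^{-4π²it|ξ|²}` to a Gaussian makes its kernel explicit; the bound on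
that kernel is uniform in the regularisation. -/
lemma norm_inner_apply_le (hU : IsSchrodingerPropagator U) {t : ℝ} (ht : t ≠ 0) {f g : L²[E]}
    (hf : Integrable f) (hg : Integrable g) :
    ‖inner ℂ g (U t f)‖ ≤
      (4 * Real.pi * |t|) ^ (-((finrank ℝ E : ℝ) / 2)) * ((∫ x, ‖f x‖) * ∫ x, ‖g x‖) := by
  refine le_of_tendsto (hU.tendsto_integral_gaussian_mul_inner_fourier t f g).norm ?_
  filter_upwards [self_mem_nhdsWithin] with ε hε
  set b : ℂ := ε + (4 * Real.pi ^ 2 * t : ℝ) * I with hb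
  have hb_re : b.re = ε := by
    rw [hb, Complex.add_re, Complex.ofReal_re, Complex.re_ofReal_mul, Complex.I_re]
    ring
  have hb_im : b.im = 4 * Real.pi ^ 2 * t := by
    rw [hb, Complex.add_im, Complex.ofReal_im, Complex.im_ofReal_mul, Complex.I_im]
    ring
  have h_fourier : ∫ ξ, cexp (-b * ‖ξ‖ ^ 2) * inner ℂ ((𝓕 g : L²[E]) ξ) ((𝓕 f : L²[E]) ξ) =
      ∫ ξ, cexp (-b * ‖ξ‖ ^ 2) * inner ℂ (𝓕 (g : E → ℂ) ξ) (𝓕 (f : E → ℂ) ξ) := by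
    refine integral_congr_ae ?_
    filter_upwards [coeFn_fourier_ae_eq_of_integrable f hf,
      coeFn_fourier_ae_eq_of_integrable g hg] with ξ hfξ hgξ
    rw [hfξ, hgξ]
  have h_le_norm : 4 * Real.pi ^ 2 * |t| ≤ ‖b‖ := by
    simpa [hb_im, abs_mul] using Complex.abs_im_le_norm b
  have h_const : Real.pi / ‖b‖ ≤ (4 * Real.pi * |t|)⁻¹ := by
    calc Real.pi / ‖b‖ ≤ Real.pi / (4 * Real.pi ^ 2 * |t|) := by gcongr
      _ = (4 * Real.pi * |t|)⁻¹ := by field_simp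
  rw [h_fourier, Real.rpow_neg (by positivity), ← Real.inv_rpow (by positivity)]
  refine (norm_integral_gaussian_mul_inner_fourier_le (hb_re ▸ hε) hf hg).trans ?_
  gcongr

end IsSchrodingerPropagator

end Dispersive

section Strichartz

/-- `(q, r)` is a sharp `σ`-admissible pair in the sense of Keel and Tao, without the endpoint
`q = 2` and the pairs with `r = ∞`. For the Schrödinger equation on `ℝᵈ` the decay rate is
`σ = d / 2`. -/
structure IsAdmissible (σ : NNReal) (q r : ℝ≥0∞) : Prop where
  two_lt : 2 < q
  ne_top : r ≠ ⊤
  scaling : 1 / q + σ / r = σ / 2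

namespace IsAdmissible

variable {σ : NNReal} {q r : ℝ≥0∞}

lemma eq_two_of_eq_top (h : IsAdmissible σ ⊤ r) (hσ : σ ≠ 0) : r = 2 := by
  have h_scaling := h.scaling
  rwa [ENNReal.div_top, zero_add, div_eq_mul_inv, div_eq_mul_inv,
    ENNReal.mul_right_inj (by simpa using hσ) ENNReal.coe_ne_top, inv_inj] at h_scaling

lemma ne_zero (h : IsAdmissible σ q r) (hσ : σ ≠ 0) : r ≠ 0 := by
  rintro rfl
  have h_scaling := h.scaling
  rw [ENNReal.div_zero (by simpa using hσ), add_top] at h_scaling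
  exact ENNReal.div_ne_top ENNReal.coe_ne_top two_ne_zero h_scaling.symm

lemma two_lt_toReal (h : IsAdmissible σ q r) (hq : q ≠ ⊤) : 2 < q.toReal := by
  simpa using (ENNReal.toReal_lt_toReal ENNReal.ofNat_ne_top hq).2 h.two_lt

lemma toReal_scaling (h : IsAdmissible σ q r) (hσ : σ ≠ 0) :
    2 / q.toReal = σ * (1 - 2 / r.toReal) := by
  have hq0 : q ≠ 0 := (zero_le.trans_lt h.two_lt).ne'
  have h_real := congrArg ENNReal.toReal h.scaling
  rw [ENNReal.toReal_add (ENNReal.div_ne_top ENNReal.one_ne_top hq0)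
    (ENNReal.div_ne_top ENNReal.coe_ne_top (h.ne_zero hσ))] at h_real
  simp only [ENNReal.toReal_div, ENNReal.toReal_one, ENNReal.coe_toReal,
    ENNReal.toReal_ofNat] at h_real
  linear_combination 2 * h_real

lemma two_lt_toReal_right (h : IsAdmissible σ q r) (hσ : σ ≠ 0) (hq : q ≠ ⊤) : 2 < r.toReal := by
  have hr_pos : 0 < r.toReal := ENNReal.toReal_pos (h.ne_zero hσ) h.ne_top
  have h_pos : 0 < (σ : ℝ) * (1 - 2 / r.toReal) := by
    rw [← h.toReal_scaling hσ]
    have := h.two_lt_toReal hq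
    positivity
  have h_lt : 2 / r.toReal < 1 := by
    linarith [pos_of_mul_pos_right h_pos σ.coe_nonneg]
  rwa [div_lt_one hr_pos] at h_lt

end IsAdmissible

lemma eLpNorm_two_eq_ofReal_norm {X : Type*} [MeasurableSpace X] {μ : Measure X} (f : Lp ℂ 2 μ) :
    eLpNorm f 2 μ = ENNReal.ofReal ‖f‖ := by
  rw [Lp.norm_def, ENNReal.ofReal_toReal (Lp.eLpNorm_ne_top f)]

namespace IsDispersiveGroup

variable {X : Type*} [MeasurableSpace X] {μ : Measure X} {U : ℝ → Lp ℂ 2 μ →ₗᵢ[ℂ] Lp ℂ 2 μ}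
  {C : ℝ} {σ : NNReal} {q r : ℝ≥0∞}

lemma lintegral_eLpNorm_rpow_le (hU : IsDispersiveGroup U C σ) (hσ : σ ≠ 0)
    (hqr : IsAdmissible σ q r) (hq : q ≠ ⊤) :
    ∃ K : ℝ, 0 < K ∧ ∀ f : Lp ℂ 2 μ,
      ∫⁻ t, eLpNorm (U t f) r μ ^ q.toReal ≤ ENNReal.ofReal (K * ‖f‖) ^ q.toReal := by
  have hq2 := hqr.two_lt_toReal hq
  have hr2 := hqr.two_lt_toReal_right hσ hq
  set K : ℝ := 2 * C ^ (1 - 2 / r.toReal) *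
    (2 / (1 - 2 / q.toReal) + 2 ^ (2 / q.toReal / 2))
  have hK : 0 < K := by
    have := hU.const_pos
    have : 0 < 1 - 2 / q.toReal := by
      rw [sub_pos, div_lt_one (by linarith)]
      exact hq2
    positivity
  refine ⟨√K, Real.sqrt_pos.2 hK, fun f => ?_⟩
  calc ∫⁻ t, eLpNorm (U t f) r μ ^ q.toReal
      = ∫⁻ t, (∫⁻ x, ‖U t f x‖ₑ ^ r.toReal ∂μ) ^ (q.toReal / r.toReal) := by
        congr 1 with t
        rw [eLpNorm_eq_lintegral_rpow_enorm_toReal (hqr.ne_zero hσ) hqr.ne_top, ← ENNReal.rpow_mul,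
          one_div_mul_eq_div]
    _ ≤ ENNReal.ofReal ((K * ‖f‖ ^ 2) ^ (2 / q.toReal)⁻¹) :=
        hU.lintegral_lintegral_enorm_rpow_le hq2 hr2 (hqr.toReal_scaling hσ) f
    _ = ENNReal.ofReal (√K * ‖f‖) ^ q.toReal := by
        rw [ENNReal.ofReal_rpow_of_nonneg (by positivity) (by positivity),
          ← Real.sqrt_sq (norm_nonneg f), ← Real.sqrt_mul hK.le, Real.sqrt_sq (norm_nonneg f),
          Real.sqrt_eq_rpow, ← Real.rpow_mul (by positivity), inv_div, one_div_mul_eq_div]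

theorem exists_eLpNorm_eLpNorm_le (hU : IsDispersiveGroup U C σ) (hσ : σ ≠ 0)
    (hqr : IsAdmissible σ q r) :
    ∃ K : ℝ, 0 < K ∧ ∀ f : Lp ℂ 2 μ,
      eLpNorm (fun t => eLpNorm (U t f) r μ) q volume ≤ ENNReal.ofReal K * eLpNorm f 2 μ := by
  rcases eq_or_ne q ⊤ with rfl | hq
  · refine ⟨1, one_pos, fun f => ?_⟩
    rw [hqr.eq_two_of_eq_top hσ, ENNReal.ofReal_one, one_mul, eLpNorm_exponent_top]
    refine essSup_le_of_ae_le _ (.of_forall fun t => ?_)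
    simp only [enorm_eq_self, eLpNorm_two_eq_ofReal_norm, LinearIsometry.norm_map, le_refl]
  · obtain ⟨K, hK, h_le⟩ := hU.lintegral_eLpNorm_rpow_le hσ hqr hq
    have hq0 : q ≠ 0 := (zero_le.trans_lt hqr.two_lt).ne'
    refine ⟨K, hK, fun f => ?_⟩
    rw [eLpNorm_eq_lintegral_rpow_enorm_toReal hq0 hq, one_div,
      ENNReal.rpow_inv_le_iff (ENNReal.toReal_pos hq0 hq), eLpNorm_two_eq_ofReal_norm,
      ← ENNReal.ofReal_mul hK.le]
    simpa only [enorm_eq_self] using h_le f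

end IsDispersiveGroup

open Module (finrank)

lemma IsSchrodingerPropagator.isDispersiveGroup {E : Type*} [NormedAddCommGroup E]
    [InnerProductSpace ℝ E] [FiniteDimensional ℝ E] [MeasurableSpace E] [BorelSpace E]
    {U : ℝ → L²[E] →ₗᵢ[ℂ] L²[E]} (hU : IsSchrodingerPropagator U) :
    IsDispersiveGroup U ((4 * Real.pi) ^ (-((finrank ℝ E : ℝ) / 2)))
      ((finrank ℝ E / 2 : NNReal) : ℝ) where
  const_pos := by positivity
  apply_add := hU.apply_add
  continuous_inner_apply := hU.continuous_inner_apply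
  norm_inner_apply_le {t} ht f g hf hg := by
    have h := hU.norm_inner_apply_le ht hf hg
    rw [Real.mul_rpow (by positivity) (abs_nonneg t)] at h
    exact_mod_cast h

theorem strichartz_estimates_general {E : Type*} [NormedAddCommGroup E] [InnerProductSpace ℝ E]
    [FiniteDimensional ℝ E] [Nontrivial E] [MeasurableSpace E] [BorelSpace E]
    {U : ℝ → L²[E] →ₗᵢ[ℂ] L²[E]} (hU : IsSchrodingerPropagator U) {q r : ℝ≥0∞}
    (hqr : IsAdmissible (finrank ℝ E / 2) q r) :
    ∃ C : ℝ, 0 < C ∧ ∀ f : L²[E],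
      eLpNorm (fun t => eLpNorm (U t f) r volume) q volume ≤
        ENNReal.ofReal C * eLpNorm f 2 volume :=
  hU.isDispersiveGroup.exists_eLpNorm_eLpNorm_le
    (div_ne_zero (Nat.cast_ne_zero.2 Module.finrank_pos.ne') two_ne_zero) hqr

lemma mixedNorm_eq_eLpNorm_eLpNorm {q : ℝ≥0∞} (hq : q ≠ 0) (r : ℝ≥0∞) (u : ℝ → E2 → ℂ) :
    mixedNorm q r u = eLpNorm (fun t => eLpNorm (u t) r volume) q volume := by
  rw [mixedNorm]
  split_ifs with hq_top
  · simp only [hq_top, eLpNorm_exponent_top, eLpNormEssSup, enorm_eq_self]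
  · simp only [eLpNorm_eq_lintegral_rpow_enorm_toReal hq hq_top, enorm_eq_self]

lemma isAdmissible_one_of_add_eq_half {q r : ℝ≥0∞} (hq : 2 < q) (hqr : 1 / q + 1 / r = 1 / 2) :
    IsAdmissible 1 q r where
  two_lt := hq
  ne_top := by
    rintro rfl
    rw [ENNReal.div_top, add_zero, one_div, one_div, inv_inj] at hqr
    exact hq.ne' hqr
  scaling := by simpa only [ENNReal.coe_one] using hqr

end Strichartz

/-- **Strichartz estimates for the Schrödinger equation on `ℝ²`.**
Here the propagator `e^{itΔ}` is formalized as any family `U t` of linear isometries of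
`L²(ℝ²)` which, on Schwartz functions, is given by the Fourier formula
`e^{itΔ} f (x) = ∫ e^{-4π² i t |ξ|²} 𝓕f(ξ) e^{2πi x·ξ} dξ`; by density this determines
`U t` uniquely.  For every pair of exponents `(q, r)` with `2 < q ≤ ∞` and
`1/q + 1/r = 1/2` there is a constant `C = C_{q,r} > 0` such that
`‖e^{itΔ} f‖_{L^q_t L^r_x(ℝ×ℝ²)} ≤ C ‖f‖_{L²(ℝ²)}` for all `f ∈ L²(ℝ²)`. -/
theorem strichartz_estimates
    (U : ℝ → (Lp ℂ 2 (volume : Measure E2) →ₗᵢ[ℂ] Lp ℂ 2 (volume : Measure E2)))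
    (hU : ∀ (t : ℝ) (f : 𝓢(E2, ℂ)) (g : Lp ℂ 2 (volume : Measure E2)),
      (g : E2 → ℂ) =ᵐ[volume] ⇑f →
      (U t g : E2 → ℂ) =ᵐ[volume] fun x : E2 =>
        ∫ ξ : E2, Complex.exp (Complex.I *
            ((2 * Real.pi * ⟪x, ξ⟫ - 4 * Real.pi ^ 2 * t * ‖ξ‖ ^ 2 : ℝ) : ℂ)) * 𝓕 (⇑f) ξ) :
    ∀ q r : ℝ≥0∞, 2 < q → 1 / q + 1 / r = 1 / 2 →
      ∃ C : ℝ, 0 < C ∧ ∀ f : Lp ℂ 2 (volume : Measure E2),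
        mixedNorm q r (fun t => (U t f : E2 → ℂ))
          ≤ ENNReal.ofReal C * eLpNorm (f : E2 → ℂ) 2 volume := by
  intro q r hq hqr
  have h_adm : IsAdmissible (Module.finrank ℝ E2 / 2) q r := by
    simpa using isAdmissible_one_of_add_eq_half hq hqr
  have hq0 : q ≠ 0 := (zero_le.trans_lt hq).ne'
  simpa only [mixedNorm_eq_eLpNorm_eLpNorm hq0] using strichartz_estimates_general hU h_adm
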